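/- arXiv:0904.0650 — 5 statements merged into one kernel-verified Lean document; each statement's English description precedes it below -/
import Mathlib

section
/- Let Q be a monic cubic complex polynomial and P a complex polynomial of degree at most 2. For every ε > 0 there exists N such that for every n ≥ N the following holds: if V and S are complex polynomials with deg V ≤ 1 and deg S = n satisfying Q·S'' + P·S' + V·S = 0 identically, then every root of V and every root of S lies at distance less than ε from the convex hull Δ_Q of the set of roots of Q (where ℂ is identified with ℝ²). -/
open Polynomial

/-!
Suppose a root of `V` or `S` is far from `Δ_Q`. It is separated from a neighbourhood of `Δ_Q` by
a disc whose center `c` is bounded independently of `S`. Among that root and the roots of `S`,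
let `z` be farthest from `c`, so that all roots of `S`, and by Gauss–Lucas those of `S'`, lie in
the disc centered at `c` with `z` on its boundary. Inversion in this disc shows that each root
`ζ` of `S'` contributes at least `1 / 2` to the real part of
`(z - c) S''(z) / S'(z) = ∑ (z - c) / (z - ζ)`.
But the equation at `z` reads `(z - c) S''(z) / S'(z) = -(z - c) P(z) / Q(z)`, and the right-hand
side is bounded for `z` away from the roots of `Q`, so the degree of `S` is bounded.
-/

lemma infDist_lt_of_mem_thickening {X : Type*} [PseudoMetricSpace X] {s : Set X} {x : X} {ε : ℝ}
    (hx : x ∈ Metric.thickening ε s) : Metric.infDist x s < ε := by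
  obtain ⟨y, hy, hxy⟩ := Metric.mem_thickening_iff.1 hx
  exact (Metric.infDist_le_dist_of_mem hy).trans_lt hxy

section SeparatingBall

variable {E : Type*} [NormedAddCommGroup E] [InnerProductSpace ℝ E]

lemma norm_add_le_norm_add_of_inner_nonpos {x y : E} {η : ℝ} (hη : 0 ≤ η)
    (hinner : inner ℝ x y ≤ 0) (hx : ‖x‖ ^ 2 ≤ 2 * ‖y‖ * η) : ‖x + y‖ ≤ ‖y‖ + η := by
  refine le_of_sq_le_sq ?_ (by positivity)
  rw [norm_add_sq_real]
  linarith [sq_nonneg η]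

-- A ball of radius `r` bulges out of its tangent half-space by about `D ^ 2 / (2 * r)` at lateral
-- distance `D`; `η` absorbs this bulge.
lemma thickening_subset_ball_of_inner_nonpos {K : Set E} {k w : E} {D δ η : ℝ} (hη : 0 ≤ η)
    (hinner : ∀ x ∈ K, inner ℝ (x - k) w ≤ 0) (hD : ∀ x ∈ K, ‖x - k‖ ≤ D)
    (hDη : D ^ 2 ≤ 2 * ‖w‖ * η) :
    Metric.thickening δ K ⊆ Metric.ball (k - w) (δ + (‖w‖ + η)) := by
  intro y hy
  obtain ⟨x, hx, hyx⟩ := Metric.mem_thickening_iff.1 hy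
  have hxw : dist x (k - w) ≤ ‖w‖ + η := by
    rw [dist_eq_norm, show x - (k - w) = (x - k) + w by abel]
    refine norm_add_le_norm_add_of_inner_nonpos hη (hinner x hx) (le_trans ?_ hDη)
    gcongr
    exact hD x hx
  calc dist y (k - w) ≤ dist y x + dist x (k - w) := dist_triangle _ _ _
    _ < δ + (‖w‖ + η) := add_lt_add_of_lt_of_le hyx hxw

lemma exists_mem_forall_inner_sub_sub_nonpos {K : Set E} (hcomplete : IsComplete K)
    (hconvex : Convex ℝ K) (hne : K.Nonempty) (z : E) :
    ∃ k ∈ K, ∀ x ∈ K, inner ℝ (z - k) (x - k) ≤ 0 := by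
  obtain ⟨k, hk, hmin⟩ := exists_norm_eq_iInf_of_complete_convex hne hcomplete hconvex z
  exact ⟨k, hk, (norm_eq_iInf_iff_real_inner_le_zero hconvex hk).1 hmin⟩

lemma exists_norm_le_thickening_subset_ball {K : Set E} (hcomplete : IsComplete K)
    (hbounded : Bornology.IsBounded K) (hconvex : Convex ℝ K) {δ ε : ℝ} (hε : 0 < ε)
    (hδε : δ < ε) :
    ∃ B, ∀ z ∉ Metric.thickening ε K, ∃ c, ‖c‖ ≤ B ∧
      Metric.thickening δ K ⊆ Metric.ball c (dist z c) := by
  rcases K.eq_empty_or_nonempty with rfl | hne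
  · exact ⟨0, fun z _ => ⟨0, by simp⟩⟩
  obtain ⟨R, hR⟩ := hbounded.exists_norm_le
  have hη : 0 < ε - δ := sub_pos.2 hδε
  obtain ⟨ρ, hρ, hρη⟩ : ∃ ρ, 0 ≤ ρ ∧ (2 * R) ^ 2 = 2 * ρ * (ε - δ) :=
    ⟨2 * R ^ 2 / (ε - δ), by positivity, by field_simp⟩
  refine ⟨R + ρ, fun z hz => ?_⟩
  obtain ⟨k, hk, hinner⟩ := exists_mem_forall_inner_sub_sub_nonpos hcomplete hconvex hne z
  have hεk : ε ≤ ‖z - k‖ := by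
    rw [← dist_eq_norm]
    exact not_lt.1 fun h => hz (Metric.mem_thickening_iff.2 ⟨k, hk, h⟩)
  have hzk : 0 < ‖z - k‖ := hε.trans_le hεk
  set w : E := (ρ / ‖z - k‖) • (z - k) with hw
  have hnorm_w : ‖w‖ = ρ := by
    rw [hw, norm_smul, Real.norm_of_nonneg (by positivity), div_mul_cancel₀ _ hzk.ne']
  have hdist_z : dist z (k - w) = ‖z - k‖ + ρ := by
    rw [dist_eq_norm, ← hnorm_w, show z - (k - w) = (z - k) + w by abel]
    exact (SameRay.sameRay_nonneg_smul_right _ (by positivity)).norm_add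
  have hinner_w : ∀ x ∈ K, inner ℝ (x - k) w ≤ 0 := fun x hx => by
    rw [hw, real_inner_smul_right, real_inner_comm]
    exact mul_nonpos_of_nonneg_of_nonpos (by positivity) (hinner x hx)
  have hdiam : ∀ x ∈ K, ‖x - k‖ ≤ 2 * R := fun x hx => by
    linarith [norm_sub_le_of_le (hR x hx) (hR k hk)]
  refine ⟨k - w, hnorm_w ▸ norm_sub_le_of_le (hR k hk) le_rfl, ?_⟩
  refine (thickening_subset_ball_of_inner_nonpos hη.le hinner_w hdiam
    (hnorm_w ▸ hρη.le)).trans (Metric.ball_subset_ball ?_)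
  linarith

end SeparatingBall

section RationalBound

open Asymptotics Filter

variable {K : Type*} [NormedField K]

lemma isBigO_eval_prod_sub (s : Multiset K) {δ : ℝ} (hδ : 0 < δ) {p : K[X]}
    (hp : p.natDegree ≤ s.card) :
    p.eval =O[𝓟 (Metric.thickening δ {a | a ∈ s})ᶜ] fun z => (s.map (z - ·)).prod := by
  induction s using Multiset.induction generalizing p with
  | empty =>
    rw [eq_C_of_natDegree_le_zero hp]
    simpa using isBigO_const_const (p.coeff 0) (one_ne_zero (α := K)) _
  | cons a s ih =>
    have hmono : 𝓟 (Metric.thickening δ {b | b ∈ a ::ₘ s})ᶜ ≤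
        𝓟 (Metric.thickening δ {b | b ∈ s})ᶜ :=
      principal_mono.2 <| Set.compl_subset_compl.2 <|
        Metric.thickening_subset_of_subset δ fun b hb => Multiset.mem_cons_of_mem hb
    have hconst : (fun _ => p.eval a) =O[𝓟 (Metric.thickening δ {b | b ∈ a ::ₘ s})ᶜ]
        fun z => z - a := by
      refine (isBigO_const_const (p.eval a) hδ.ne' _).trans (isBigO_principal.2 ⟨1, ?_⟩)
      intro z hz
      rw [one_mul, Real.norm_of_nonneg hδ.le, ← dist_eq_norm]
      exact not_lt.1 fun h =>
        hz (Metric.mem_thickening_iff.2 ⟨a, Multiset.mem_cons_self a s, h⟩)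
    have hone := (ih (p := 1) (by simp)).mono hmono
    have hquot := (ih (p := p /ₘ (X - C a)) (by
      rw [natDegree_divByMonic p (monic_X_sub_C a), natDegree_X_sub_C]
      rw [Multiset.card_cons] at hp
      omega)).mono hmono
    have hdivision : p.eval =
        fun z => p.eval a * (1 : K[X]).eval z + (z - a) * (p /ₘ (X - C a)).eval z := by
      ext z
      conv_lhs => rw [← modByMonic_add_div p (X - C a), modByMonic_X_sub_C_eq_C_eval]
      simp
    simp only [Multiset.map_cons, Multiset.prod_cons]
    rw [hdivision]
    exact (hconst.mul hone).add ((isBigO_refl _ _).mul hquot)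

lemma isBigO_eval_eval_of_degree_le {p q : K[X]} (hq : q.Splits)
    (hpq : p.degree ≤ q.degree) {δ : ℝ} (hδ : 0 < δ) :
    p.eval =O[𝓟 (Metric.thickening δ {a | q.IsRoot a})ᶜ] q.eval := by
  rcases eq_or_ne q 0 with rfl | hq0
  · rw [degree_zero, le_bot_iff, degree_eq_bot] at hpq
    exact hpq ▸ isBigO_refl _ _
  have hprod := isBigO_eval_prod_sub q.roots hδ (p := p)
    (hq.natDegree_eq_card_roots ▸ natDegree_le_natDegree hpq)
  have hroots : {a | a ∈ q.roots} = {a | q.IsRoot a} := Set.ext fun a => mem_roots hq0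
  rw [hroots] at hprod
  rw [funext hq.eval_eq_prod_roots]
  exact (isBigO_const_mul_right_iff (leadingCoeff_ne_zero.2 hq0)).2 hprod

lemma exists_norm_sub_mul_eval_div_eval_le {p q : K[X]} (hq : q.Splits)
    (hpq : p.degree < q.degree) (B : ℝ) {δ : ℝ} (hδ : 0 < δ) :
    ∃ M, ∀ c, ‖c‖ ≤ B → ∀ z ∉ Metric.thickening δ {a | q.IsRoot a},
      ‖(z - c) * (p.eval z / q.eval z)‖ ≤ M := by
  have hXp : (X * p).degree ≤ q.degree := by
    rw [X_mul, degree_mul_X]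
    exact Nat.WithBot.add_one_le_of_lt hpq
  obtain ⟨M₁, hM₁⟩ := isBigO_principal.1 (isBigO_eval_eval_of_degree_le hq hXp hδ)
  obtain ⟨M₂, hM₂⟩ := isBigO_principal.1 (isBigO_eval_eval_of_degree_le hq hpq.le hδ)
  refine ⟨M₁ + B * M₂, fun c hc z hz => ?_⟩
  have hqz : 0 < ‖q.eval z‖ :=
    norm_pos_iff.2 fun h => hz (Metric.self_subset_thickening hδ _ h)
  have hB : 0 ≤ B := (norm_nonneg c).trans hc
  rw [← mul_div_assoc, norm_div, div_le_iff₀ hqz]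
  calc ‖(z - c) * p.eval z‖ = ‖(X * p).eval z - c * p.eval z‖ := by simp [sub_mul]
    _ ≤ ‖(X * p).eval z‖ + ‖c‖ * ‖p.eval z‖ := norm_mul c _ ▸ norm_sub_le _ _
    _ ≤ M₁ * ‖q.eval z‖ + B * (M₂ * ‖q.eval z‖) := by
      gcongr
      exacts [hM₁ z hz, hM₂ z hz]
    _ = (M₁ + B * M₂) * ‖q.eval z‖ := by ring

end RationalBound

section LogarithmicDerivative

lemma norm_sub_one_le_norm_iff {v : ℂ} : ‖v - 1‖ ≤ ‖v‖ ↔ 1 / 2 ≤ v.re := by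
  rw [← sq_le_sq₀ (norm_nonneg _) (norm_nonneg _), Complex.sq_norm, Complex.sq_norm,
    Complex.normSq_apply, Complex.normSq_apply]
  simp only [Complex.sub_re, Complex.one_re, Complex.sub_im, Complex.one_im]
  constructor <;> intro h <;> linarith

lemma half_le_re_sub_div_sub {z c ζ : ℂ} (hne : z ≠ ζ)
    (hζ : ζ ∈ Metric.closedBall c (dist z c)) : 1 / 2 ≤ ((z - c) / (z - ζ)).re := by
  have hsub : z - ζ ≠ 0 := sub_ne_zero.2 hne
  rw [← norm_sub_one_le_norm_iff, div_sub_one hsub, sub_sub_sub_cancel_left, norm_div, norm_div]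
  rw [Metric.mem_closedBall, dist_eq_norm, dist_eq_norm] at hζ
  gcongr

variable {f : ℂ[X]} {z c : ℂ}

lemma natDegree_div_two_le_norm_sub_mul_eval_derivative_div_eval (hz : f.eval z ≠ 0)
    (hroots : f.rootSet ℂ ⊆ Metric.closedBall c (dist z c)) :
    (f.natDegree : ℝ) / 2 ≤ ‖(z - c) * (f.derivative.eval z / f.eval z)‖ := by
  have hf : f ≠ 0 := by rintro rfl; simp at hz
  have hsplits : f.Splits := IsAlgClosed.splits f
  have hsum : ((z - c) * (f.derivative.eval z / f.eval z)).re =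
      (f.roots.map fun ζ => ((z - c) / (z - ζ)).re).sum := by
    rw [hsplits.eval_derivative_div_eval_of_ne_zero hz, ← Multiset.sum_map_mul_left,
      ← Complex.coe_reAddGroupHom, map_multiset_sum, Multiset.map_map]
    simp only [mul_one_div, Function.comp_def, Complex.coe_reAddGroupHom]
  have hterm : ∀ ζ ∈ f.roots, 1 / 2 ≤ ((z - c) / (z - ζ)).re := by
    intro ζ hζ
    have hroot : f.eval ζ = 0 := isRoot_of_mem_roots hζ
    refine half_le_re_sub_div_sub ?_ (hroots (mem_rootSet.2 ⟨hf, by simpa using hroot⟩))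
    rintro rfl
    exact hz hroot
  calc (f.natDegree : ℝ) / 2
      = (f.roots.map fun ζ => ((z - c) / (z - ζ)).re).card • (1 / 2 : ℝ) := by
        rw [Multiset.card_map, ← hsplits.natDegree_eq_card_roots, nsmul_eq_mul, mul_one_div]
    _ ≤ (f.roots.map fun ζ => ((z - c) / (z - ζ)).re).sum :=
        Multiset.card_nsmul_le_sum fun x hx => by
          obtain ⟨ζ, hζ, rfl⟩ := Multiset.mem_map.1 hx
          exact hterm ζ hζ
    _ = ((z - c) * (f.derivative.eval z / f.eval z)).re := hsum.symm
    _ ≤ ‖(z - c) * (f.derivative.eval z / f.eval z)‖ := Complex.re_le_norm _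

lemma eval_derivative_ne_zero_of_rootSet_subset_closedBall (hf : 0 < f.natDegree)
    (hz : f.eval z ≠ 0) (hroots : f.rootSet ℂ ⊆ Metric.closedBall c (dist z c)) :
    f.derivative.eval z ≠ 0 := by
  intro hz'
  have hdeg := natDegree_div_two_le_norm_sub_mul_eval_derivative_div_eval hz hroots
  rw [hz', zero_div, mul_zero, norm_zero] at hdeg
  have hpos : (0 : ℝ) < f.natDegree := mod_cast hf
  linarith

end LogarithmicDerivative

/-- `S` is a Heine–Stieltjes polynomial, with Van Vleck polynomial `V`, of the generalized Lamé
equation `Q S'' + P S' + V S = 0`. -/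
def IsHeineStieltjes {R : Type*} [CommRing R] (Q P V S : R[X]) : Prop :=
  Q * derivative (derivative S) + P * derivative S + V * S = 0

lemma derivative_ne_zero_of_isRoot {R : Type*} [CommRing R] [IsDomain R] [CharZero R] {p : R[X]}
    {z : R} (hp : p ≠ 0) (hz : p.IsRoot z) : derivative p ≠ 0 := by
  intro h
  have hconst := eq_C_of_derivative_eq_zero h
  rw [hconst, IsRoot.def, eval_C] at hz
  rw [hz, C_0] at hconst
  exact hp hconst

namespace IsHeineStieltjes

lemma eval_derivative_ne_zero_of_isRoot {R : Type*} [CommRing R] [IsDomain R] [CharZero R]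
    {Q P V S : R[X]} (h : IsHeineStieltjes Q P V S) (hS : S ≠ 0) {z : R} (hQz : Q.eval z ≠ 0)
    (hz : S.IsRoot z) : (derivative S).eval z ≠ 0 := by
  intro hz'
  have hS' : derivative S ≠ 0 := derivative_ne_zero_of_isRoot hS hz
  have hS'' : derivative (derivative S) ≠ 0 := derivative_ne_zero_of_isRoot hS' hz'
  have hQ : Q ≠ 0 := by rintro rfl; simp at hQz
  have hm : 1 < S.rootMultiplicity z := (one_lt_rootMultiplicity_iff_isRoot hS).2 ⟨hz, hz'⟩
  have hm' : (derivative S).rootMultiplicity z = S.rootMultiplicity z - 1 :=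
    derivative_rootMultiplicity_of_root hz
  have hm'' : (Q * derivative (derivative S)).rootMultiplicity z = S.rootMultiplicity z - 2 := by
    rw [rootMultiplicity_mul (mul_ne_zero hQ hS''), rootMultiplicity_eq_zero hQz, zero_add,
      derivative_rootMultiplicity_of_root hz', hm', Nat.sub_sub]
  have hdvd : (X - C z) ^ (S.rootMultiplicity z - 1) ∣ Q * derivative (derivative S) := by
    have hlower : Q * derivative (derivative S) = -(P * derivative S + V * S) :=
      eq_neg_of_add_eq_zero_left ((add_assoc _ _ _).symm.trans h)
    rw [hlower, dvd_neg]
    exact dvd_add (Dvd.dvd.mul_left ((le_rootMultiplicity_iff hS').1 hm'.ge) _)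
      (Dvd.dvd.mul_left ((le_rootMultiplicity_iff hS).1 (Nat.sub_le _ _)) _)
  have hle := (le_rootMultiplicity_iff (mul_ne_zero hQ hS'')).2 hdvd
  omega

variable {Q P V S : ℂ[X]} {z c : ℂ}

lemma eval_derivative_ne_zero (h : IsHeineStieltjes Q P V S) (hS : 0 < S.natDegree)
    (hQz : Q.eval z ≠ 0) (hroots : S.rootSet ℂ ⊆ Metric.closedBall c (dist z c)) :
    (derivative S).eval z ≠ 0 := by
  by_cases hz : S.IsRoot z
  · exact h.eval_derivative_ne_zero_of_isRoot (ne_zero_of_natDegree_gt hS) hQz hz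
  · exact eval_derivative_ne_zero_of_rootSet_subset_closedBall hS hz hroots

lemma natDegree_derivative_div_two_le (h : IsHeineStieltjes Q P V S) (hS : 0 < S.natDegree)
    (hz : V.IsRoot z ∨ S.IsRoot z) (hQz : Q.eval z ≠ 0)
    (hroots : S.rootSet ℂ ⊆ Metric.closedBall c (dist z c)) :
    ((derivative S).natDegree : ℝ) / 2 ≤ ‖(z - c) * (P.eval z / Q.eval z)‖ := by
  have hS'z : (derivative S).eval z ≠ 0 := h.eval_derivative_ne_zero hS hQz hroots
  have hroots' : (derivative S).rootSet ℂ ⊆ Metric.closedBall c (dist z c) :=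
    (rootSet_derivative_subset_convexHull_rootSet (natDegree_pos_iff_degree_pos.1 hS)).trans
      (convexHull_min hroots (convex_closedBall c _))
  have hVS : V.eval z * S.eval z = 0 := mul_eq_zero.2 hz
  have heval : Q.eval z * (derivative (derivative S)).eval z + P.eval z * (derivative S).eval z +
      V.eval z * S.eval z = 0 := by
    simpa only [eval_add, eval_mul, eval_zero] using congrArg (eval z) h
  have hratio : (derivative (derivative S)).eval z / (derivative S).eval z =
      -(P.eval z / Q.eval z) := by
    field_simp
    linear_combination heval - hVS
  simpa only [hratio, mul_neg, norm_neg] using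
    natDegree_div_two_le_norm_sub_mul_eval_derivative_div_eval hS'z hroots'

end IsHeineStieltjes

theorem stmt0_general {Q P : ℂ[X]} (hPQ : P.degree < Q.degree) {ε : ℝ} (hε : 0 < ε) :
    ∃ N : ℕ, ∀ V S : ℂ[X], N ≤ S.natDegree → IsHeineStieltjes Q P V S →
      ∀ z, V.IsRoot z ∨ S.IsRoot z → z ∈ Metric.thickening ε (convexHull ℝ {w | Q.IsRoot w}) := by
  have hcompact : IsCompact (convexHull ℝ {w | Q.IsRoot w}) :=
    (finite_setOfPred_isRoot (ne_zero_of_degree_gt hPQ)).isCompact_convexHull ℝ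
  obtain ⟨B, hB⟩ := exists_norm_le_thickening_subset_ball hcompact.isComplete hcompact.isBounded
    (convex_convexHull ℝ _) hε (half_lt_self hε)
  obtain ⟨M, hM⟩ :=
    exists_norm_sub_mul_eval_div_eval_le (IsAlgClosed.splits Q) hPQ B (half_pos hε)
  refine ⟨⌊2 * M⌋₊ + 2, fun V S hdeg hVS z hz => ?_⟩
  by_contra hfar
  obtain ⟨c, hc, hball⟩ := hB z hfar
  have hSdeg : 0 < S.natDegree := by omega
  obtain ⟨w, hw, hmax⟩ := Set.exists_max_image (insert z (S.rootSet ℂ)) (dist · c)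
    ((rootSet_finite S ℂ).insert z) (Set.insert_nonempty z _)
  have hwroot : V.IsRoot w ∨ S.IsRoot w := by
    rcases hw with rfl | hw
    exacts [hz, Or.inr (by simpa using (mem_rootSet.1 hw).2)]
  have hwfar : w ∉ Metric.thickening (ε / 2) {a | Q.IsRoot a} := fun hwnear =>
    (hmax z (Set.mem_insert z _)).not_gt
      (hball (Metric.thickening_subset_of_subset _ (subset_convexHull ℝ _) hwnear))
  have hQw : Q.eval w ≠ 0 := fun h => hwfar (Metric.self_subset_thickening (half_pos hε) _ h)
  have hbound : ((derivative S).natDegree : ℝ) / 2 ≤ M :=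
    (hVS.natDegree_derivative_div_two_le hSdeg hwroot hQw
      fun ζ hζ => hmax ζ (Set.mem_insert_of_mem z hζ)).trans (hM c hc w hwfar)
  have hfloor : (derivative S).natDegree ≤ ⌊2 * M⌋₊ := Nat.le_floor (by linarith)
  rw [natDegree_derivative] at hfloor
  omega

/-- Theorem 2 (part 2) of Shapiro–Takemura–Tater: for a monic cubic `Q` and `P` of degree
at most 2, for every `ε > 0` there is `N` such that for all `n ≥ N`, every root of every
Van Vleck polynomial `V` (of degree at most 1) admitting a Stieltjes polynomial `S` of
degree `n`, as well as every root of that `S`, lies within distance `ε` of the convex hull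
of the roots of `Q`. -/
theorem stmt0 (Q P : Polynomial ℂ) (hQmonic : Q.Monic) (hQdeg : Q.natDegree = 3)
    (hP : P.degree ≤ 2) :
    ∀ ε : ℝ, 0 < ε → ∃ N : ℕ, ∀ n : ℕ, N ≤ n →
      ∀ V S : Polynomial ℂ, V.degree ≤ 1 → S.natDegree = n →
        Q * (derivative (derivative S)) + P * (derivative S) + V * S = 0 →
        (∀ z ∈ V.roots, Metric.infDist z (convexHull ℝ {w : ℂ | Q.IsRoot w}) < ε) ∧
        (∀ z ∈ S.roots, Metric.infDist z (convexHull ℝ {w : ℂ | Q.IsRoot w}) < ε) := by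
  intro ε hε
  have hPQ : P.degree < Q.degree := by
    rw [degree_eq_natDegree hQmonic.ne_zero, hQdeg]
    exact hP.trans_lt (by norm_num)
  obtain ⟨N, hN⟩ := stmt0_general hPQ hε
  exact ⟨N, fun n hn V S _ hS hode =>
    ⟨fun z hz => infDist_lt_of_mem_thickening <|
        hN V S (hS ▸ hn) hode z (Or.inl (isRoot_of_mem_roots hz)),
      fun z hz => infDist_lt_of_mem_thickening <|
        hN V S (hS ▸ hn) hode z (Or.inr (isRoot_of_mem_roots hz))⟩⟩
end

section
/- Let Q be a monic cubic complex polynomial and P a complex polynomial of degree at most 2. There exists N such that for every n ≥ N, the set 𝒱_n of complex polynomials V with deg V ≤ 1 for which the equation Q·S'' + P·S' + V·S = 0 admits a polynomial solution S of degree exactly n is nonempty and finite, with at most n+1 elements. -/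
open Polynomial

/-! Applied to a polynomial of degree at most `k`, the operator `L S = Q S'' + P S'` yields one of
degree at most `k + 1`, and it multiplies the coefficient of `X ^ k` by a scalar `c k`. Hence a
solution of `L S + V S = 0` of degree `n` forces `V = -(c n X + μ)`. Since `L - c n X` maps the
polynomials of degree at most `n` to themselves, such `V` correspond to eigenvalues `μ` of an
endomorphism of an `(n + 1)`-dimensional space, so there are at most `n + 1` of them. Conversely,
an eigenvector of degree `k ≤ n` satisfies `c k = c n`, and for large `n` this forces `k = n`. -/

section LeadingFactor

variable {R : Type*} [CommSemiring R]

/-- The linear operator `L` on polynomials raises degrees by at most one, and `c k` is the factor by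
which it acts on top coefficients in degree `k`. The factor `c k` may vanish, and `S.coeff k` is
allowed to be zero, so that such operators are closed under addition. -/
def HasLeadingFactor (L : R[X] →ₗ[R] R[X]) (c : ℕ → R) : Prop :=
  ∀ ⦃k : ℕ⦄ ⦃S : R[X]⦄, S.natDegree ≤ k → (L S).coeff (k + 1) = c k * S.coeff k

theorem HasLeadingFactor.add {L M : R[X] →ₗ[R] R[X]} {c d : ℕ → R} (hL : HasLeadingFactor L c)
    (hM : HasLeadingFactor M d) : HasLeadingFactor (L + M) (c + d) := fun k S hS => by
  rw [LinearMap.add_apply, coeff_add, hL hS, hM hS, Pi.add_apply, add_mul]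

theorem hasLeadingFactor_mulLeft_comp_derivative_pow {A : R[X]} {j : ℕ}
    (hA : A.natDegree ≤ j + 1) :
    HasLeadingFactor (LinearMap.mulLeft R A ∘ₗ derivative ^ j)
      (fun k => A.coeff (j + 1) * k.descFactorial j) := by
  intro k S hS
  rw [LinearMap.comp_apply, LinearMap.mulLeft_apply, Module.End.pow_apply]
  obtain hkj | hjk := lt_or_ge k j
  · simp [iterate_derivative_eq_zero (hS.trans_lt hkj), Nat.descFactorial_of_lt hkj]
  · obtain ⟨i, rfl⟩ := Nat.exists_eq_add_of_le hjk
    have hdeg : (derivative^[j] S).natDegree ≤ i :=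
      (natDegree_iterate_derivative S j).trans (by lia)
    rw [show j + i + 1 = (j + 1) + i by ring, coeff_mul_add_eq_of_natDegree_le hA hdeg,
      coeff_iterate_derivative, add_comm i j, nsmul_eq_mul, mul_assoc]

theorem hasLeadingFactor_mulLeft {A : R[X]} (hA : A.natDegree ≤ 1) :
    HasLeadingFactor (LinearMap.mulLeft R A) (fun _ => A.coeff 1) := fun k S hS => by
  rw [LinearMap.mulLeft_apply, add_comm, coeff_mul_add_eq_of_natDegree_le hA hS]

/-- The polynomials `V` of degree at most one for which `L S + V S = 0` has a solution `S` of degree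
exactly `n`; for a differential operator `L` these are the Van Vleck polynomials. -/
def vanVleckSet (L : R[X] →ₗ[R] R[X]) (n : ℕ) : Set R[X] :=
  {V | V.degree ≤ 1 ∧ ∃ S : R[X], S.degree = n ∧ L S + V * S = 0}

end LeadingFactor

section Eigenvalues

variable {R : Type*} [CommRing R]

theorem ncard_hasEigenvalue_le_finrank [IsDomain R] {M : Type*} [AddCommGroup M] [Module R M]
    [Module.Free R M] [Module.Finite R M] (f : Module.End R M) :
    {μ | f.HasEigenvalue μ}.ncard ≤ Module.finrank R M := by
  have hroots : {μ | f.HasEigenvalue μ} = f.charpoly.rootSet R := by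
    ext μ
    simp [Module.End.hasEigenvalue_iff_isRoot_charpoly, mem_rootSet, f.charpoly_monic.ne_zero]
  rw [hroots, ← f.charpoly_natDegree]
  exact ncard_rootSet_le _ R

theorem finrank_degreeLT [Nontrivial R] (n : ℕ) : Module.finrank R (degreeLT R n) = n := by
  rw [(degreeLTEquiv R n).finrank_eq, Module.finrank_fin_fun]

namespace HasLeadingFactor

variable {L : R[X] →ₗ[R] R[X]} {c : ℕ → R} {n : ℕ}

theorem sub_mul_mem_degreeLT (hL : HasLeadingFactor L c) {S : R[X]}
    (hS : S ∈ degreeLT R (n + 1)) :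
    L S - C (c n) * X * S ∈ degreeLT R (n + 1) := by
  rw [mem_degreeLT, degree_lt_iff_coeff_zero] at hS ⊢
  intro m hm
  obtain ⟨k, rfl⟩ := Nat.exists_eq_add_of_le' (Nat.le_of_add_left_le hm)
  have hSk : S.natDegree ≤ k := natDegree_le_iff_coeff_eq_zero.2 fun j hj => hS j (by lia)
  rw [coeff_sub, hL hSk, mul_assoc, coeff_C_mul, coeff_X_mul]
  obtain rfl | hnk := (Nat.le_of_add_le_add_right hm).eq_or_lt
  · exact sub_self _
  · rw [hS k hnk, mul_zero, mul_zero, sub_zero]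

/-- The endomorphism `S ↦ L S - c n X S` of the space of polynomials of degree at most `n`; its
eigenvalues are the candidates for `-V(0)`, where `V` ranges over `vanVleckSet L n`. -/
noncomputable def compression (hL : HasLeadingFactor L c) (n : ℕ) :
    Module.End R (degreeLT R (n + 1)) :=
  (L - LinearMap.mulLeft R (C (c n) * X)).restrict fun _ hS => by
    simpa only [LinearMap.sub_apply, LinearMap.mulLeft_apply] using hL.sub_mul_mem_degreeLT hS

theorem compression_apply_eq_smul_iff (hL : HasLeadingFactor L c) {μ : R}
    {S : degreeLT R (n + 1)} :
    hL.compression n S = μ • S ↔ L S + -(C (c n) * X + C μ) * (S : R[X]) = 0 := by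
  rw [← Subtype.coe_inj, compression, LinearMap.coe_restrict_apply, LinearMap.sub_apply,
    LinearMap.mulLeft_apply, Submodule.coe_smul, smul_eq_C_mul, ← sub_eq_zero]
  ring_nf

variable [IsDomain R]

theorem coeff_one_eq_neg (hL : HasLeadingFactor L c) {S V : R[X]} (hV : V.natDegree ≤ 1)
    (hS : S ≠ 0) (hLS : L S + V * S = 0) : V.coeff 1 = -c S.natDegree := by
  have hcoeff := (hL.add (hasLeadingFactor_mulLeft hV)) le_rfl (S := S)
  rw [LinearMap.add_apply, LinearMap.mulLeft_apply, hLS, coeff_zero, eq_comm, mul_eq_zero,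
    or_iff_left (show S.coeff S.natDegree ≠ 0 from leadingCoeff_ne_zero.2 hS)] at hcoeff
  exact eq_neg_of_add_eq_zero_right hcoeff

theorem vanVleckSet_subset_image (hL : HasLeadingFactor L c) (n : ℕ) :
    vanVleckSet L n ⊆
      (fun μ => -(C (c n) * X + C μ)) '' {μ | (hL.compression n).HasEigenvalue μ} := by
  rintro V ⟨hV, S, hSdeg, hLS⟩
  have hS0 : S ≠ 0 := by
    rintro rfl
    simp at hSdeg
  have hSmem : S ∈ degreeLT R (n + 1) := by
    rw [mem_degreeLT, hSdeg]
    exact_mod_cast n.lt_succ_self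
  have hV1 : V.coeff 1 = -c n := by
    rw [hL.coeff_one_eq_neg (natDegree_le_of_degree_le hV) hS0 hLS,
      natDegree_eq_of_degree_eq_some hSdeg]
  have hVeq : -(C (c n) * X + C (-V.coeff 0)) = V := by
    conv_rhs => rw [eq_X_add_C_of_degree_le_one hV, hV1]
    simp only [C_neg]
    ring
  refine ⟨-V.coeff 0, Module.End.hasEigenvalue_of_hasEigenvector (x := ⟨S, hSmem⟩)
    ⟨Module.End.mem_eigenspace_iff.2 ?_, fun h => hS0 (congrArg Subtype.val h)⟩, hVeq⟩
  rw [hL.compression_apply_eq_smul_iff, hVeq]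
  exact hLS

theorem finite_vanVleckSet (hL : HasLeadingFactor L c) (n : ℕ) : (vanVleckSet L n).Finite :=
  (((hL.compression n).finite_hasEigenvalue).image _).subset (hL.vanVleckSet_subset_image n)

theorem ncard_vanVleckSet_le (hL : HasLeadingFactor L c) (n : ℕ) :
    (vanVleckSet L n).ncard ≤ n + 1 := by
  have hfin := (hL.compression n).finite_hasEigenvalue
  calc (vanVleckSet L n).ncard
      ≤ ((fun μ => -(C (c n) * X + C μ)) '' {μ | (hL.compression n).HasEigenvalue μ}).ncard :=
        Set.ncard_le_ncard (hL.vanVleckSet_subset_image n) (hfin.image _)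
    _ ≤ {μ | (hL.compression n).HasEigenvalue μ}.ncard := Set.ncard_image_le hfin
    _ ≤ Module.finrank R (degreeLT R (n + 1)) := ncard_hasEigenvalue_le_finrank _
    _ = n + 1 := finrank_degreeLT (n + 1)

theorem neg_mem_vanVleckSet (hL : HasLeadingFactor L c) (hc : ∀ k < n, c k ≠ c n) {μ : R}
    (hμ : (hL.compression n).HasEigenvalue μ) : -(C (c n) * X + C μ) ∈ vanVleckSet L n := by
  obtain ⟨S, hS⟩ := hμ.exists_hasEigenvector
  have hS0 : (S : R[X]) ≠ 0 := fun h => hS.2 (Subtype.ext h)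
  have hLS := hL.compression_apply_eq_smul_iff.1 hS.apply_eq_smul
  have hdeg : (-(C (c n) * X + C μ)).natDegree ≤ 1 := by
    rw [natDegree_neg]
    exact natDegree_linear_le
  have hle : (S : R[X]).natDegree ≤ n :=
    Nat.lt_succ_iff.1 ((natDegree_lt_iff_degree_lt hS0).2 (mem_degreeLT.1 S.2))
  have hfactor : c (S : R[X]).natDegree = c n := by
    simpa [eq_comm] using hL.coeff_one_eq_neg hdeg hS0 hLS
  have hSn : (S : R[X]).natDegree = n := hle.eq_of_not_lt fun hlt => hc _ hlt hfactor
  exact ⟨degree_le_of_natDegree_le hdeg, S, (degree_eq_iff_natDegree_eq hS0).2 hSn, hLS⟩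

theorem vanVleckSet_nonempty {K : Type*} [Field K] [IsAlgClosed K] {L : K[X] →ₗ[K] K[X]}
    {c : ℕ → K} (hL : HasLeadingFactor L c) (hc : ∀ k < n, c k ≠ c n) :
    (vanVleckSet L n).Nonempty := by
  have : Nontrivial (degreeLT K (n + 1)) :=
    Module.nontrivial_of_finrank_pos (R := K) (by rw [finrank_degreeLT]; exact n.succ_pos)
  obtain ⟨μ, hμ⟩ := Module.End.exists_eigenvalue (hL.compression n)
  exact ⟨_, hL.neg_mem_vanVleckSet hc hμ⟩

end HasLeadingFactor

end Eigenvalues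

section Heun

/-- The differential part `S ↦ Q S'' + P S'` of Heun's equation `Q S'' + P S' + V S = 0`. -/
noncomputable def heunOperator {R : Type*} [CommSemiring R] (Q P : R[X]) : R[X] →ₗ[R] R[X] :=
  LinearMap.mulLeft R Q ∘ₗ derivative ^ 2 + LinearMap.mulLeft R P ∘ₗ derivative

theorem hasLeadingFactor_heunOperator {R : Type*} [CommRing R] {Q P : R[X]}
    (hQ : Q.natDegree ≤ 3) (hP : P.natDegree ≤ 2) :
    HasLeadingFactor (heunOperator Q P)
      (fun k => Q.coeff 3 * (k * (k - 1)) + P.coeff 2 * k) := by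
  have h := (hasLeadingFactor_mulLeft_comp_derivative_pow (j := 2) hQ).add
    (hasLeadingFactor_mulLeft_comp_derivative_pow (j := 1) hP)
  simp only [pow_one, Nat.cast_descFactorial_two, Nat.descFactorial_one] at h
  exact h

theorem exists_forall_quadratic_ne {R : Type*} [CommRing R] [IsDomain R] [CharZero R] {q p : R}
    (hqp : q ≠ 0 ∨ p ≠ 0) :
    ∃ N : ℕ, ∀ n : ℕ, N ≤ n → ∀ k < n,
      q * ((k : R) * (k - 1)) + p * k ≠ q * ((n : R) * (n - 1)) + p * n := by
  have hzeros : {m : ℕ | q * ((m : R) - 1) + p = 0}.Subsingleton := by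
    intro m (hm : q * ((m : R) - 1) + p = 0) m' (hm' : q * ((m' : R) - 1) + p = 0)
    have hq : q ≠ 0 := by
      rintro rfl
      simp_all
    exact_mod_cast mul_left_cancel₀ hq (by linear_combination hm - hm' : q * (m : R) = q * m')
  obtain ⟨B, hB⟩ := hzeros.finite.bddAbove
  refine ⟨B + 1, fun n hn k hk h => ?_⟩
  have hprod : ((n : R) - k) * (q * (((n + k : ℕ) : R) - 1) + p) = 0 := by
    push_cast
    linear_combination -h
  obtain hnk | hsum := mul_eq_zero.1 hprod
  · exact hk.ne' (Nat.cast_injective (sub_eq_zero.1 hnk))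
  · have : n + k ≤ B := hB hsum
    lia

theorem stmt1_general {K : Type*} [Field K] [IsAlgClosed K] [CharZero K] {Q P : K[X]}
    (hQ : Q.natDegree ≤ 3) (hP : P.natDegree ≤ 2) (hQP : Q.coeff 3 ≠ 0 ∨ P.coeff 2 ≠ 0) :
    ∃ N : ℕ, ∀ n : ℕ, N ≤ n →
      (vanVleckSet (heunOperator Q P) n).Nonempty ∧ (vanVleckSet (heunOperator Q P) n).Finite ∧
        (vanVleckSet (heunOperator Q P) n).ncard ≤ n + 1 := by
  have hL := hasLeadingFactor_heunOperator hQ hP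
  obtain ⟨N, hN⟩ := exists_forall_quadratic_ne hQP
  exact ⟨N, fun n hn =>
    ⟨hL.vanVleckSet_nonempty (hN n hn), hL.finite_vanVleckSet n, hL.ncard_vanVleckSet_le n⟩⟩

end Heun

/-- Theorem 2 (part 1): for a monic cubic `Q` and `P` of degree at most 2, there is `N`
such that for every `n ≥ N` the set of Van Vleck polynomials `V` of degree at most 1
admitting a polynomial solution `S` of degree exactly `n` of the Heun equation
`Q S'' + P S' + V S = 0` is nonempty and finite with at most `n + 1` elements. -/
theorem stmt1 (Q P : Polynomial ℂ) (hQmonic : Q.Monic) (hQdeg : Q.natDegree = 3)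
    (hP : P.degree ≤ 2) :
    ∃ N : ℕ, ∀ n : ℕ, N ≤ n →
      ({V : Polynomial ℂ | V.degree ≤ 1 ∧ ∃ S : Polynomial ℂ, S.degree = (n : WithBot ℕ) ∧
          Q * (derivative (derivative S)) + P * (derivative S) + V * S = 0}).Nonempty ∧
      ({V : Polynomial ℂ | V.degree ≤ 1 ∧ ∃ S : Polynomial ℂ, S.degree = (n : WithBot ℕ) ∧
          Q * (derivative (derivative S)) + P * (derivative S) + V * S = 0}).Finite ∧
      ({V : Polynomial ℂ | V.degree ≤ 1 ∧ ∃ S : Polynomial ℂ, S.degree = (n : WithBot ℕ) ∧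
          Q * (derivative (derivative S)) + P * (derivative S) + V * S = 0}).ncard ≤ n + 1 :=
  stmt1_general hQdeg.le (natDegree_le_of_degree_le hP)
    (.inl (by rw [← hQdeg, hQmonic.coeff_natDegree]; exact one_ne_zero))
end

section
/- Let Q be a monic cubic complex polynomial with three distinct roots a₁, a₂, a₃ and let P be a complex polynomial of degree at most 2 such that for each i the residue P(a_i)/Q'(a_i) of the rational function P/Q at a_i is a positive real number. Then for any complex polynomials V with deg V ≤ 1 and any nonzero polynomial S satisfying Q·S'' + P·S' + V·S = 0 identically, every root of V and every root of S lies in the convex hull Δ_Q of {a₁, a₂, a₃}. -/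
open Polynomial

/-!
If `z` lies outside a closed convex set `K`, then for a suitable `c` we have
`Re (c w) < Re (c z)` for all `w ∈ K`. Hence every `1 / (z - w)` with `w ∈ K` lies in the open
half-plane `{u | 0 < Re (c⁻¹ u)}`, and so does every nonzero combination of such terms with
nonnegative coefficients. Where `V S` vanishes but `S'` does not, the equation reads
`S'' / S' + P / Q = 0`. Partial fractions write `P / Q` as such a combination over the roots of `Q`,
with the residues as coefficients, and `S'' / S'` is one over the roots of `S'`, which the
Gauss–Lucas theorem places in the hull of the roots of `S`. So the two summands cannot cancel at a
point strictly beyond the roots of `Q` and weakly beyond those of `S`. For the roots of `S` itself,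
this is applied to one that maximizes `Re (c z)`: it is simple because `Q` does not vanish there.
-/

section HalfPlane

open scoped ComplexOrder

lemma re_inv_mul_div_sub (r : ℝ) (c z w : ℂ) :
    (c⁻¹ * (r / (z - w))).re =
      r * (((c * z).re - (c * w).re) / Complex.normSq (c * (z - w))) := by
  rw [div_eq_mul_inv, mul_left_comm, ← mul_inv, Complex.re_ofReal_mul, Complex.inv_re,
    ← Complex.sub_re, ← mul_sub]

variable {c z w ρ : ℂ}

lemma re_inv_mul_div_sub_nonneg (hρ : 0 ≤ ρ) (h : (c * w).re ≤ (c * z).re) :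
    0 ≤ (c⁻¹ * (ρ / (z - w))).re := by
  obtain ⟨r, hr, rfl⟩ := RCLike.nonneg_iff_exists_ofReal.1 hρ
  exact (re_inv_mul_div_sub r c z w).symm ▸
    mul_nonneg hr (div_nonneg (sub_nonneg.2 h) (Complex.normSq_nonneg _))

lemma re_inv_mul_div_sub_pos (hρ : 0 < ρ) (h : (c * w).re < (c * z).re) :
    0 < (c⁻¹ * (ρ / (z - w))).re := by
  obtain ⟨r, hr, rfl⟩ := RCLike.pos_iff_exists_ofReal.1 hρ
  have hne : c * (z - w) ≠ 0 := fun h0 ↦ h.ne' (by rw [mul_sub, sub_eq_zero] at h0; rw [h0])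
  exact (re_inv_mul_div_sub r c z w).symm ▸
    mul_pos hr (div_pos (sub_pos.2 h) (Complex.normSq_pos.2 hne))

lemma re_inv_mul_eval_derivative_div_nonneg {T : ℂ[X]} (hTz : T.eval z ≠ 0)
    (hT : ∀ w ∈ T.roots, (c * w).re ≤ (c * z).re) :
    0 ≤ (c⁻¹ * (T.derivative.eval z / T.eval z)).re := by
  rw [(IsAlgClosed.splits T).eval_derivative_div_eval_of_ne_zero hTz, ← Multiset.sum_map_mul_left,
    ← Complex.coe_reAddGroupHom, map_multiset_sum, Multiset.map_map]
  refine Multiset.sum_nonneg fun x hx ↦ ?_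
  obtain ⟨w, hw, rfl⟩ := Multiset.mem_map.1 hx
  exact re_inv_mul_div_sub_nonneg zero_le_one (hT w hw)

lemma convex_setOf_re_mul_le (c : ℂ) (r : ℝ) : Convex ℝ {w : ℂ | (c * w).re ≤ r} :=
  (convex_halfSpace_re_le r).linear_preimage (LinearMap.mulLeft ℝ c)

lemma exists_forall_re_mul_lt_of_notMem {K : Set ℂ} (hK : Convex ℝ K) (hKc : IsClosed K)
    (hz : z ∉ K) : ∃ c : ℂ, ∀ w ∈ K, (c * w).re < (c * z).re := by
  obtain ⟨f, u, hfu, huz⟩ := RCLike.geometric_hahn_banach_closed_point (𝕜 := ℂ) hK hKc hz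
  have hf (w : ℂ) : f w = f 1 * w := by simpa [mul_comm] using f.map_smul w 1
  refine ⟨f 1, fun w hw ↦ ?_⟩
  rw [← hf, ← hf]
  exact (hfu w hw).trans huz

end HalfPlane

section Field

variable {F : Type*} [Field F]

lemma eval_derivative_nodal_ne_zero {ι : Type*} {s : Finset ι} {a : ι → F} (ha : Set.InjOn a s)
    {i : ι} (hi : i ∈ s) : (Lagrange.nodal s a).derivative.eval (a i) ≠ 0 := by
  classical
  simpa [Lagrange.nodalWeight_eq_eval_derivative_nodal hi] using Lagrange.nodalWeight_ne_zero ha hi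

lemma eval_div_eval_nodal_eq_sum {ι : Type*} {s : Finset ι} {a : ι → F} (ha : Set.InjOn a s)
    {P : F[X]} (hP : P.degree < s.card) {z : F} (hz : ∀ i ∈ s, z ≠ a i) :
    P.eval z / (Lagrange.nodal s a).eval z =
      ∑ i ∈ s, P.eval (a i) / (Lagrange.nodal s a).derivative.eval (a i) / (z - a i) := by
  classical
  nth_rw 1 [Lagrange.eq_interpolate ha hP]
  rw [Lagrange.eval_interpolate_not_at_node _ hz,
    mul_div_cancel_left₀ _ (Lagrange.eval_nodal_not_at_node hz)]
  refine Finset.sum_congr rfl fun i hi ↦ ?_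
  rw [Lagrange.nodalWeight_eq_eval_derivative_nodal hi]
  ring

variable [CharZero F]

lemma derivative_ne_zero_of_isRoot_s2 {p : F[X]} {y : F} (hp : p ≠ 0) (hy : p.IsRoot y) :
    derivative p ≠ 0 := fun h ↦
  (natDegree_pos_iff_degree_pos.2 (degree_pos_of_root hp hy)).ne' (derivative_eq_zero.1 h)

-- At a root of multiplicity `m ≥ 2`, `Q S''` would vanish to order `m - 2` only, whereas
-- `P S' + V S` vanishes to order at least `m - 1`.
lemma eval_derivative_ne_zero_of_second_order_eq {Q P V S : F[X]} (hS : S ≠ 0)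
    (heq : Q * derivative (derivative S) + P * derivative S + V * S = 0) {y : F}
    (hSy : S.IsRoot y) (hQy : Q.eval y ≠ 0) : S.derivative.eval y ≠ 0 := by
  intro hS'y
  set m := S.rootMultiplicity y
  have hm : 1 < m := (one_lt_rootMultiplicity_iff_isRoot hS).2 ⟨hSy, hS'y⟩
  have hS' : S.derivative.rootMultiplicity y = m - 1 := derivative_rootMultiplicity_of_root hSy
  have hS'' : S.derivative.derivative.rootMultiplicity y = m - 1 - 1 := by
    rw [derivative_rootMultiplicity_of_root hS'y, hS']
  have hne : Q * S.derivative.derivative ≠ 0 :=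
    mul_ne_zero (fun h ↦ hQy (by rw [h, eval_zero]))
      (derivative_ne_zero_of_isRoot_s2 (derivative_ne_zero_of_isRoot_s2 hS hSy) hS'y)
  have hQS'' : (Q * S.derivative.derivative).rootMultiplicity y = m - 1 - 1 := by
    rw [rootMultiplicity_mul hne, rootMultiplicity_eq_zero hQy, hS'', zero_add]
  have hdvd : (X - C y) ^ (m - 1) ∣ Q * S.derivative.derivative := by
    rw [eq_neg_of_add_eq_zero_left ((add_assoc _ _ _).symm.trans heq), dvd_neg]
    refine dvd_add (Dvd.dvd.mul_left ?_ _) (Dvd.dvd.mul_left ?_ _)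
    · exact hS' ▸ pow_rootMultiplicity_dvd _ _
    · exact (pow_dvd_pow _ (Nat.sub_le _ _)).trans (pow_rootMultiplicity_dvd _ _)
  have := (le_rootMultiplicity_iff hne).2 hdvd
  omega

end Field

section GeneralizedLame

open scoped ComplexOrder

variable {ι : Type*} {s : Finset ι} {a : ι → ℂ} {P V S : ℂ[X]} {c z : ℂ}

lemma re_inv_mul_eval_div_eval_nodal_pos (ha : Set.InjOn a s) (hP : P.degree < s.card)
    (hP0 : P ≠ 0) (hres : ∀ i ∈ s, 0 ≤ P.eval (a i) / (Lagrange.nodal s a).derivative.eval (a i))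
    (hz : ∀ i ∈ s, (c * a i).re < (c * z).re) :
    0 < (c⁻¹ * (P.eval z / (Lagrange.nodal s a).eval z)).re := by
  have hne : ∀ i ∈ s, z ≠ a i := fun i hi h ↦ (hz i hi).ne (by rw [h])
  obtain ⟨j, hj, hPj⟩ : ∃ j ∈ s, P.eval (a j) ≠ 0 := by
    by_contra! h
    exact hP0 (eq_zero_of_degree_lt_of_eval_index_eq_zero _ ha hP h)
  have hres_pos : 0 < P.eval (a j) / (Lagrange.nodal s a).derivative.eval (a j) :=
    (hres j hj).lt_of_ne' (div_ne_zero hPj (eval_derivative_nodal_ne_zero ha hj))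
  rw [eval_div_eval_nodal_eq_sum ha hP hne, Finset.mul_sum, Complex.re_sum]
  exact Finset.sum_pos' (fun i hi ↦ re_inv_mul_div_sub_nonneg (hres i hi) (hz i hi).le)
    ⟨j, hj, re_inv_mul_div_sub_pos hres_pos (hz j hj)⟩

lemma eval_mul_ne_zero_of_re_lt_of_re_le (ha : Set.InjOn a s) (hP : P.degree < s.card)
    (hP0 : P ≠ 0) (hres : ∀ i ∈ s, 0 ≤ P.eval (a i) / (Lagrange.nodal s a).derivative.eval (a i))
    (hS : 0 < S.degree)
    (heq : Lagrange.nodal s a * derivative (derivative S) + P * derivative S + V * S = 0)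
    (hz : ∀ i ∈ s, (c * a i).re < (c * z).re) (hSz : ∀ w ∈ S.rootSet ℂ, (c * w).re ≤ (c * z).re)
    (hS'z : S.derivative.eval z ≠ 0) : (V * S).eval z ≠ 0 := by
  intro hVS
  have hQz : (Lagrange.nodal s a).eval z ≠ 0 :=
    Lagrange.eval_nodal_not_at_node fun i hi h ↦ (hz i hi).ne (by rw [h])
  have hsum : S.derivative.derivative.eval z / S.derivative.eval z +
      P.eval z / (Lagrange.nodal s a).eval z = 0 := by
    have h := congrArg (eval z) heq
    rw [eval_add, hVS, add_zero, eval_add, eval_mul, eval_mul, eval_zero] at h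
    field_simp
    linear_combination h
  have hS'roots : ∀ w ∈ S.derivative.roots, (c * w).re ≤ (c * z).re := fun w hw ↦
    convexHull_min hSz (convex_setOf_re_mul_le c _)
      (rootSet_derivative_subset_convexHull_rootSet hS (by simpa [mem_rootSet] using hw))
  have hlog := re_inv_mul_eval_derivative_div_nonneg hS'z hS'roots
  have hquot := re_inv_mul_eval_div_eval_nodal_pos ha hP hP0 hres hz
  have hadd := add_pos_of_nonneg_of_pos hlog hquot
  rw [← Complex.add_re, ← mul_add, hsum, mul_zero, Complex.zero_re] at hadd
  exact hadd.false

lemma exists_forall_re_mul_lt_of_notMem_convexHull_image (hz : z ∉ convexHull ℝ (a '' s)) :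
    ∃ c : ℂ, ∀ w ∈ convexHull ℝ (a '' s), (c * w).re < (c * z).re :=
  exists_forall_re_mul_lt_of_notMem (convex_convexHull ℝ _)
    ((s.finite_toSet.image a).isClosed_convexHull ℝ) hz

lemma rootSet_stieltjes_subset_convexHull (ha : Set.InjOn a s) (hP : P.degree < s.card)
    (hP0 : P ≠ 0) (hres : ∀ i ∈ s, 0 ≤ P.eval (a i) / (Lagrange.nodal s a).derivative.eval (a i))
    (hS : S ≠ 0)
    (heq : Lagrange.nodal s a * derivative (derivative S) + P * derivative S + V * S = 0) :
    S.rootSet ℂ ⊆ convexHull ℝ (a '' s) := by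
  intro z hz
  by_contra hzK
  obtain ⟨c, hc⟩ := exists_forall_re_mul_lt_of_notMem_convexHull_image hzK
  obtain ⟨y, hy, hmax⟩ :=
    (S.rootSet ℂ).exists_max_image (fun w ↦ (c * w).re) (S.rootSet_finite ℂ) ⟨z, hz⟩
  have hya : ∀ i ∈ s, (c * a i).re < (c * y).re := fun i hi ↦
    (hc _ (subset_convexHull ℝ _ (Set.mem_image_of_mem a hi))).trans_le (hmax z hz)
  have hSy : S.IsRoot y := by simpa using (mem_rootSet.1 hy).2
  have hQy : (Lagrange.nodal s a).eval y ≠ 0 :=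
    Lagrange.eval_nodal_not_at_node fun i hi h ↦ (hya i hi).ne (by rw [h])
  exact eval_mul_ne_zero_of_re_lt_of_re_le ha hP hP0 hres (degree_pos_of_root hS hSy) heq hya hmax
    (eval_derivative_ne_zero_of_second_order_eq hS heq hSy hQy) (by simp [hSy.eq_zero])

lemma rootSet_vanVleck_subset_convexHull (ha : Set.InjOn a s) (hP : P.degree < s.card)
    (hP0 : P ≠ 0) (hres : ∀ i ∈ s, 0 ≤ P.eval (a i) / (Lagrange.nodal s a).derivative.eval (a i))
    (hS : S ≠ 0)
    (heq : Lagrange.nodal s a * derivative (derivative S) + P * derivative S + V * S = 0) :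
    V.rootSet ℂ ⊆ convexHull ℝ (a '' s) := by
  intro z hz
  by_contra hzK
  obtain ⟨hV, hVz⟩ : V ≠ 0 ∧ V.eval z = 0 := by simpa [mem_rootSet] using hz
  have hS' : derivative S ≠ 0 := fun h ↦ by simp [h, hV, hS] at heq
  have hdeg : 0 < S.degree :=
    natDegree_pos_iff_degree_pos.1 (Nat.pos_of_ne_zero (mt derivative_eq_zero.2 hS'))
  have hSK := rootSet_stieltjes_subset_convexHull ha hP hP0 hres hS heq
  have hS'K : S.derivative.rootSet ℂ ⊆ convexHull ℝ (a '' s) :=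
    (rootSet_derivative_subset_convexHull_rootSet hdeg).trans
      (convexHull_min hSK (convex_convexHull ℝ _))
  have hS'z : S.derivative.eval z ≠ 0 := fun h ↦ hzK (hS'K (by simpa [mem_rootSet, hS'] using h))
  obtain ⟨c, hc⟩ := exists_forall_re_mul_lt_of_notMem_convexHull_image hzK
  exact eval_mul_ne_zero_of_re_lt_of_re_le ha hP hP0 hres hdeg heq
    (fun i hi ↦ hc _ (subset_convexHull ℝ _ (Set.mem_image_of_mem a hi)))
    (fun w hw ↦ (hc w (hSK hw)).le) hS'z (by simp [hVz])

theorem stmt2_general (ha : Set.InjOn a s) {Q : ℂ[X]} (hQ : Q = ∏ i ∈ s, (X - C (a i)))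
    (hP : P.degree < s.card) (hP0 : P ≠ 0)
    (hres : ∀ i ∈ s, 0 ≤ P.eval (a i) / Q.derivative.eval (a i)) (hS : S ≠ 0)
    (heq : Q * derivative (derivative S) + P * derivative S + V * S = 0) :
    V.rootSet ℂ ⊆ convexHull ℝ (a '' s) ∧ S.rootSet ℂ ⊆ convexHull ℝ (a '' s) := by
  subst hQ
  exact ⟨rootSet_vanVleck_subset_convexHull ha hP hP0 hres hS heq,
    rootSet_stieltjes_subset_convexHull ha hP hP0 hres hS heq⟩

end GeneralizedLame

/-- Pólya's theorem for the Heun equation: if `Q` is a monic cubic with distinct roots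
`a 0, a 1, a 2`, `P` has degree at most 2, and all residues `P(aᵢ)/Q'(aᵢ)` of `P/Q` are
positive real numbers, then every root of every Van Vleck polynomial `V` (deg ≤ 1) and of
every nonzero Stieltjes polynomial `S` solving `Q S'' + P S' + V S = 0` lies in the convex
hull of `{a 0, a 1, a 2}`. -/
theorem stmt2 (a : Fin 3 → ℂ) (hinj : Function.Injective a)
    (Q : Polynomial ℂ) (hQ : Q = (X - C (a 0)) * (X - C (a 1)) * (X - C (a 2)))
    (P : Polynomial ℂ) (hP : P.degree ≤ 2)
    (hres : ∀ i : Fin 3,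
      0 < (P.eval (a i) / (derivative Q).eval (a i)).re ∧
      (P.eval (a i) / (derivative Q).eval (a i)).im = 0)
    (V S : Polynomial ℂ) (hV : V.degree ≤ 1) (hS : S ≠ 0)
    (heq : Q * (derivative (derivative S)) + P * (derivative S) + V * S = 0) :
    (∀ z ∈ V.roots, z ∈ convexHull ℝ ({a 0, a 1, a 2} : Set ℂ)) ∧
    (∀ z ∈ S.roots, z ∈ convexHull ℝ ({a 0, a 1, a 2} : Set ℂ)) := by
  have hP0 : P ≠ 0 := fun h ↦ by simpa [h] using (hres 0).1
  simpa [Set.subset_def, mem_rootSet, Fin.range_fin_succ, Fin.tail] using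
    stmt2_general (s := Finset.univ) hinj.injOn (by simpa [Fin.prod_univ_three] using hQ)
      (hP.trans_lt (by decide)) hP0
      (fun i _ ↦ Complex.nonneg_iff.2 ⟨(hres i).1.le, (hres i).2.symm⟩) hS heq
end

section
/- Let h : ℂ → ℂ be a locally integrable measurable function such that h(z) → 0 as |z| → ∞ and such that for every smooth compactly supported function φ : ℂ → ℂ one has ∫_ℂ h(z)·(∂φ/∂z̄)(z) dλ(z) = 0 (i.e., ∂h/∂z̄ = 0 in the sense of distributions). Then h = 0 Lebesgue-almost everywhere. -/
open MeasureTheory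

/-- The Wirtinger derivative `∂φ/∂z̄ = (1/2)(∂φ/∂x + i ∂φ/∂y)` of a map `φ : ℂ → ℂ`,
expressed via the real Fréchet derivative in the directions `1` and `I`. -/
noncomputable def dbar (φ : ℂ → ℂ) (z : ℂ) : ℂ :=
  (1 / 2 : ℂ) * (fderiv ℝ φ z 1 + Complex.I * fderiv ℝ φ z Complex.I)

/-!
If `ρ` is a test function, then `∂(ρ ⋆ h)/∂z̄ = (∂ρ/∂z̄) ⋆ h`, and up to sign the value of the right
side at `x` is the pairing of `h` with the `∂/∂z̄`-derivative of the test function `t ↦ ρ (x - t)`,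
which is zero. Hence the mollification `ρ ⋆ h` is entire; it inherits decay at infinity from `h`,
so it vanishes identically by Liouville's theorem. Its value at the origin is the pairing of `h`
with `t ↦ ρ (-t)`, so `h` is orthogonal to all test functions.
-/

open Complex ContinuousLinearMap Filter Function
open scoped ContDiff Convolution Topology

theorem fderiv_comp_const_sub {𝕜 E F : Type*} [NontriviallyNormedField 𝕜]
    [NormedAddCommGroup E] [NormedSpace 𝕜 E] [NormedAddCommGroup F] [NormedSpace 𝕜 F]
    (f : E → F) (x t : E) : fderiv 𝕜 (fun s ↦ f (x - s)) t = -fderiv 𝕜 f (x - t) := by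
  have hneg := (ContinuousLinearEquiv.neg 𝕜 (M := E)).comp_right_fderiv
    (f := fun s ↦ f (x + s)) (x := t)
  ext v
  simpa [comp_def, sub_eq_add_neg, fderiv_comp_add_left] using DFunLike.congr_fun hneg v

section Convolution

variable {𝕜 G E F F' : Type*} [NormedAddCommGroup E] [NormedAddCommGroup F] [NormedAddCommGroup F']
  [NormedSpace ℝ F'] [MeasurableSpace G] {μ : Measure G} {f : G → E} {g : G → F}

section Decay

variable [NontriviallyNormedField 𝕜] [NormedSpace 𝕜 E] [NormedSpace 𝕜 F] [NormedSpace 𝕜 F']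
  [AddGroup G] (L : E →L[𝕜] F →L[𝕜] F')

theorem norm_convolution_le_of_forall_mem_support {x : G} {C : ℝ} (hf : Integrable f μ)
    (hg : ∀ t ∈ support f, ‖g (x - t)‖ ≤ C) :
    ‖(f ⋆[L, μ] g) x‖ ≤ ‖L‖ * (∫ t, ‖f t‖ ∂μ) * C := by
  have hbound (t : G) : ‖L (f t) (g (x - t))‖ ≤ ‖L‖ * ‖f t‖ * C := by
    by_cases ht : f t = 0
    · simp [ht]
    · exact L.le_of_opNorm₂_le_of_le le_rfl le_rfl (hg t ht)
  calc ‖(f ⋆[L, μ] g) x‖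
      ≤ ∫ t, ‖L‖ * ‖f t‖ * C ∂μ :=
        norm_integral_le_of_norm_le ((hf.norm.const_mul _).mul_const _) (.of_forall hbound)
    _ = ‖L‖ * (∫ t, ‖f t‖ ∂μ) * C := by rw [integral_mul_const, integral_const_mul]

theorem tendsto_convolution_cocompact_zero [TopologicalSpace G] [ContinuousAdd G]
    (hcf : HasCompactSupport f) (hf : Integrable f μ) (hg : Tendsto g (cocompact G) (𝓝 0)) :
    Tendsto (f ⋆[L, μ] g) (cocompact G) (𝓝 0) := by
  refine NormedAddGroup.tendsto_nhds_zero.2 fun ε hε ↦ ?_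
  obtain ⟨δ, hδ, hδε⟩ := exists_pos_mul_lt hε (‖L‖ * ∫ t, ‖f t‖ ∂μ)
  obtain ⟨K, hK, hgK⟩ := mem_cocompact.1 (NormedAddGroup.tendsto_nhds_zero.1 hg δ hδ)
  filter_upwards [(hK.add hcf.isCompact).compl_mem_cocompact] with x hx
  refine (norm_convolution_le_of_forall_mem_support L hf fun t ht ↦ ?_).trans_lt hδε
  have hxt : x - t ∉ K := fun hmem ↦
    hx ⟨x - t, hmem, t, subset_tsupport f ht, sub_add_cancel x t⟩
  exact (hgK hxt).le

end Decay

section Derivative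

variable [RCLike 𝕜] [NormedSpace 𝕜 E] [NormedSpace 𝕜 F] [NormedSpace 𝕜 F']
  [NormedAddCommGroup G] [NormedSpace 𝕜 G] [BorelSpace G]
  [SFinite μ] [μ.IsAddLeftInvariant] [μ.IsNegInvariant] (L : E →L[𝕜] F →L[𝕜] F')

theorem fderiv_convolution_left_apply (hcf : HasCompactSupport f) (hf : ContDiff 𝕜 1 f)
    (hg : LocallyIntegrable g μ) (x v : G) :
    fderiv 𝕜 (f ⋆[L, μ] g) x v = ((fun a ↦ fderiv 𝕜 f a v) ⋆[L, μ] g) x := by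
  have hder := (hcf.hasFDerivAt_convolution_right L.flip hg hf x).fderiv
  rw [convolution_flip] at hder
  rw [hder, convolution_precompR_apply L.flip hg (hcf.fderiv 𝕜)
    (hf.continuous_fderiv one_ne_zero), convolution_flip]

end Derivative

end Convolution

section Wirtinger

variable {E : Type*} [NormedAddCommGroup E] [NormedSpace ℂ E]

/-- The Wirtinger derivative `∂f/∂z̄` of a map from `ℂ` to a complex normed space. For `E = ℂ` it
is definitionally `dbar`; the vector-valued version is applied to mollifications of `E`-valued
functions. -/
noncomputable def vectorDbar (f : ℂ → E) (z : ℂ) : E :=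
  (1 / 2 : ℂ) • (fderiv ℝ f z 1 + I • fderiv ℝ f z I)

/-- The equation `∂h/∂z̄ = 0` in the sense of distributions, for `h` locally integrable with values
in a complex Banach space: the pairing of `h` with `∂φ/∂z̄` vanishes for all complex-valued test
functions `φ`. -/
def IsWeaklyHolomorphic (h : ℂ → E) : Prop :=
  ∀ φ : ℂ → ℂ, ContDiff ℝ ∞ φ → HasCompactSupport φ → ∫ z, dbar φ z • h z = 0

theorem differentiableAt_complex_iff_vectorDbar_eq_zero {f : ℂ → E} {z : ℂ} :
    DifferentiableAt ℂ f z ↔ DifferentiableAt ℝ f z ∧ vectorDbar f z = 0 := by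
  rw [differentiableAt_complex_iff_differentiableAt_real]
  refine and_congr_right fun _ ↦ ?_
  have hI : fderiv ℝ f z 1 + I • fderiv ℝ f z I = I • (fderiv ℝ f z I - I • fderiv ℝ f z 1) := by
    rw [smul_sub, smul_smul, I_mul_I, neg_one_smul, sub_neg_eq_add, add_comm]
  rw [vectorDbar, hI, smul_eq_zero_iff_right (by norm_num), smul_eq_zero_iff_right I_ne_zero,
    sub_eq_zero]

theorem dbar_comp_const_sub (φ : ℂ → ℂ) (x t : ℂ) :
    dbar (fun s ↦ φ (x - s)) t = -dbar φ (x - t) := by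
  simp only [dbar, fderiv_comp_const_sub, neg_apply]
  ring

variable {h : ℂ → E} {ρ : ℂ → ℂ}

theorem vectorDbar_convolution (hcρ : HasCompactSupport ρ) (hρ : ContDiff ℝ 1 ρ)
    (hh : LocallyIntegrable h) (x : ℂ) :
    vectorDbar (ρ ⋆[lsmul ℝ ℂ] h) x = (dbar ρ ⋆[lsmul ℝ ℂ] h) x := by
  have hint (v : ℂ) : Integrable fun t ↦ fderiv ℝ ρ t v • h (x - t) :=
    (hcρ.fderiv_apply ℝ v).convolutionExists_left (lsmul ℝ ℂ)
      ((hρ.continuous_fderiv one_ne_zero).clm_apply continuous_const) hh x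
  simp only [vectorDbar, fderiv_convolution_left_apply _ hcρ hρ hh, convolution_def,
    lsmul_apply, dbar]
  rw [← integral_smul, ← integral_add (hint 1) ((hint I).fun_smul I), ← integral_smul]
  simp only [smul_smul, add_smul, smul_add, mul_add]

namespace IsWeaklyHolomorphic

theorem dbar_convolution_eq_zero (hw : IsWeaklyHolomorphic h) (hcρ : HasCompactSupport ρ)
    (hρ : ContDiff ℝ ∞ ρ) (x : ℂ) : (dbar ρ ⋆[lsmul ℝ ℂ] h) x = 0 := by
  have hzero : ∫ t, dbar (fun s ↦ ρ (x - s)) t • h t = 0 :=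
    hw _ (hρ.comp (contDiff_const.sub contDiff_id)) (hcρ.comp_homeomorph (Homeomorph.subLeft x))
  simpa only [convolution_eq_swap, lsmul_apply, dbar_comp_const_sub, neg_smul,
    integral_neg, neg_eq_zero] using hzero

theorem differentiable_convolution (hw : IsWeaklyHolomorphic h) (hh : LocallyIntegrable h)
    (hcρ : HasCompactSupport ρ) (hρ : ContDiff ℝ ∞ ρ) :
    Differentiable ℂ (ρ ⋆[lsmul ℝ ℂ] h) := by
  intro x
  have hρ1 : ContDiff ℝ 1 ρ := hρ.of_le (by exact_mod_cast le_top)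
  refine differentiableAt_complex_iff_vectorDbar_eq_zero.2
    ⟨(hcρ.hasFDerivAt_convolution_left (lsmul ℝ ℂ) hρ1 hh x).differentiableAt, ?_⟩
  rw [vectorDbar_convolution hcρ hρ1 hh, hw.dbar_convolution_eq_zero hcρ hρ]

theorem convolution_eq_zero (hw : IsWeaklyHolomorphic h) (hh : LocallyIntegrable h)
    (h0 : Tendsto h (cocompact ℂ) (𝓝 0)) (hcρ : HasCompactSupport ρ) (hρ : ContDiff ℝ ∞ ρ) :
    ρ ⋆[lsmul ℝ ℂ] h = 0 :=
  (hw.differentiable_convolution hh hcρ hρ).eq_const_of_tendsto_cocompact <|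
    tendsto_convolution_cocompact_zero _ hcρ (hρ.continuous.integrable_of_hasCompactSupport hcρ) h0

end IsWeaklyHolomorphic

theorem stmt4_general [CompleteSpace E] (hh : LocallyIntegrable h)
    (h0 : Tendsto h (cocompact ℂ) (𝓝 0)) (hw : IsWeaklyHolomorphic h) :
    ∀ᵐ z, h z = 0 := by
  refine ae_eq_zero_of_integral_contDiff_smul_eq_zero hh fun g hg hcg ↦ ?_
  let ρ : ℂ → ℂ := fun z ↦ (g (-z) : ℂ)
  have hρ : ContDiff ℝ ∞ ρ := ofRealCLM.contDiff.comp (hg.comp contDiff_neg)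
  have hcρ : HasCompactSupport ρ :=
    (hcg.comp_homeomorph (Homeomorph.neg ℂ)).comp_left (g := ofReal) ofReal_zero
  have hzero : (ρ ⋆[lsmul ℝ ℂ] h) 0 = 0 := congr_fun (hw.convolution_eq_zero hh h0 hcρ hρ) 0
  simpa only [convolution_eq_swap, lsmul_apply, ρ, zero_sub, neg_neg, coe_smul] using hzero

end Wirtinger

/-- A locally integrable function on `ℂ` which vanishes at infinity and satisfies
`∂h/∂z̄ = 0` in the sense of distributions vanishes almost everywhere. -/
theorem stmt4 (h : ℂ → ℂ)
    (hloc : MeasureTheory.LocallyIntegrable h MeasureTheory.volume)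
    (h0 : Filter.Tendsto h (Filter.cocompact ℂ) (nhds 0))
    (hdist : ∀ φ : ℂ → ℂ, ContDiff ℝ (⊤ : ℕ∞) φ → HasCompactSupport φ →
      ∫ z, h z * dbar φ z = 0) :
    ∀ᵐ z ∂(MeasureTheory.volume : Measure ℂ), h z = 0 := by
  refine stmt4_general hloc h0 fun φ hφ hcφ ↦ ?_
  simpa only [smul_eq_mul, mul_comm] using hdist φ hφ hcφ
end

section
/- Let U₁ and U₂ be monic complex polynomials with deg U₂ = deg U₁ + 2. Then there exists at most one compactly supported positive Borel measure μ on ℂ with total mass 1 whose Cauchy transform satisfies C_μ(z)² = U₁(z)/U₂(z) for Lebesgue-almost every z ∈ ℂ. That is, if μ and ν are two such measures, then μ = ν. -/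
open MeasureTheory Polynomial

/-!
Write `p_ρ` for the logarithmic potential and `C_ρ` for the Cauchy transform of `ρ`, so that
`∇ p_ρ = conj C_ρ` and `div (conj C_ρ) = 2πρ` in the sense of distributions; in particular `C_ρ`
determines `ρ`. Let `u = p_μ - p_ν`. Since `C_μ² = C_ν²`, almost everywhere `C_μ = C_ν` or
`C_μ = -C_ν`. With `Φ_± = M arctan² ± arctan`, test the first divergence formula with
`χ Φ_+(u)` for `ρ = μ` and with `χ Φ_-(u)` for `ρ = ν`, where the cutoff `χ` vanishes near the
finitely many points at which the Cauchy transforms may be unbounded, and near infinity. The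
quadratic parts of the interior terms cancel, because `|C_μ| = |C_ν|`, and what remains is
`∫ χ |C_μ - C_ν|² / (1 + u²)`. As `ρ ≥ 0` and `Φ_± ≥ -1 / (4M)`, the measure terms are `O(1 / M)`.
The terms with `∇χ` are also `O(1 / M) + o(1)`: near a point `a` only the atom of `ρ` at `a`
matters, and its field is radial; near infinity `u → 0`. Letting first `χ → 1` and then `M → ∞`
yields `C_μ = C_ν`.
-/

open Set Filter Topology Metric
open scoped ComplexConjugate ENNReal

lemma integrableOn_ball_norm_inv (r : ℝ) : IntegrableOn (fun z : ℂ => ‖z‖⁻¹) (ball 0 r) := by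
  rw [integrableOn_fun_norm_addHaar volume (f := fun y => y⁻¹), Complex.finrank_real_complex]
  refine (integrableOn_const (C := (1 : ℝ)) (by simp)).congr_fun (fun y hy => ?_) measurableSet_Ioo
  have hy' : y ≠ 0 := hy.1.ne'
  simp [hy']

lemma setIntegral_ball_norm_inv {r : ℝ} (hr : 0 ≤ r) :
    ∫ z : ℂ in ball 0 r, ‖z‖⁻¹ = 2 * Real.pi * r := by
  have hradial : ∫ z : ℂ in ball 0 r, ‖z‖⁻¹ =
      ∫ z : ℂ, (Iio r).indicator (fun y : ℝ => y⁻¹) ‖z‖ := by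
    rw [← integral_indicator measurableSet_ball]
    simp [indicator]
  have hone : ∀ y ∈ Ioi (0 : ℝ), y ^ (2 - 1) • (Iio r).indicator (fun y : ℝ => y⁻¹) y =
      (Iio r).indicator (fun _ => 1) y := fun y hy => by
    have hy' : y ≠ 0 := (mem_Ioi.1 hy).ne'
    by_cases h : y < r <;> simp [indicator, h, hy']
  rw [hradial, integral_fun_norm_addHaar, Complex.finrank_real_complex,
    setIntegral_congr_fun measurableSet_Ioi hone, setIntegral_indicator measurableSet_Iio,
    Ioi_inter_Iio]
  simp [Measure.real, hr]
  ring

lemma preimage_sub_right_ball_zero (ξ : ℂ) (r : ℝ) : (· - ξ) ⁻¹' ball 0 r = ball ξ r := by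
  ext z
  simp [dist_eq_norm]

lemma integrableOn_ball_norm_inv_sub (a : ℂ) (r : ℝ) (ξ : ℂ) :
    IntegrableOn (fun z => ‖(z - ξ)⁻¹‖) (ball a r) := by
  have hξ : IntegrableOn (fun z => ‖z - ξ‖⁻¹) (ball ξ (r + dist a ξ)) := by
    rw [← preimage_sub_right_ball_zero]
    exact ((measurePreserving_sub_right volume ξ).integrableOn_comp_preimage
      (Homeomorph.subRight ξ).measurableEmbedding).2 (integrableOn_ball_norm_inv _)
  simpa only [norm_inv] using hξ.mono_set (ball_subset_ball' le_rfl)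

lemma setIntegral_ball_self_norm_inv_sub (ξ : ℂ) {r : ℝ} (hr : 0 ≤ r) :
    ∫ z in ball ξ r, ‖(z - ξ)⁻¹‖ = 2 * Real.pi * r := by
  rw [← setIntegral_ball_norm_inv hr, ← preimage_sub_right_ball_zero]
  simpa only [norm_inv] using
    (measurePreserving_sub_right volume ξ).setIntegral_preimage_emb
      (Homeomorph.subRight ξ).measurableEmbedding (fun z => ‖z‖⁻¹) (ball 0 r)

lemma setIntegral_ball_norm_inv_sub_le (a : ℂ) {r : ℝ} (hr : 0 ≤ r) (ξ : ℂ) :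
    ∫ z in ball a r, ‖(z - ξ)⁻¹‖ ≤ 3 * Real.pi * r := by
  have hfar : ∫ z in ball a r \ ball ξ r, ‖(z - ξ)⁻¹‖ ≤
      r⁻¹ * volume.real (ball a r \ ball ξ r) := by
    refine (Real.le_norm_self _).trans (norm_setIntegral_le_of_norm_le_const
      ((measure_mono sdiff_subset).trans_lt measure_ball_lt_top) fun z hz => ?_)
    rw [norm_norm, norm_inv]
    have : r ≤ ‖z - ξ‖ := by simpa [dist_eq_norm] using hz.2
    rcases hr.eq_or_lt with rfl | hr
    · simp at hz
    · gcongr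
  calc ∫ z in ball a r, ‖(z - ξ)⁻¹‖
      ≤ ∫ z in ball ξ r ∪ (ball a r \ ball ξ r), ‖(z - ξ)⁻¹‖ :=
        setIntegral_mono_set
          ((integrableOn_ball_norm_inv_sub _ _ _).union
            ((integrableOn_ball_norm_inv_sub _ _ _).mono_set sdiff_subset))
          (.of_forall fun z => norm_nonneg _) (LE.le.eventuallyLE (by simp))
    _ = (∫ z in ball ξ r, ‖(z - ξ)⁻¹‖) + ∫ z in ball a r \ ball ξ r, ‖(z - ξ)⁻¹‖ :=
        setIntegral_union disjoint_sdiff_right (measurableSet_ball.diff measurableSet_ball)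
          (integrableOn_ball_norm_inv_sub _ _ _)
          ((integrableOn_ball_norm_inv_sub _ _ _).mono_set sdiff_subset)
    _ ≤ 2 * Real.pi * r + r⁻¹ * volume.real (ball a r) := by
        rw [setIntegral_ball_self_norm_inv_sub ξ hr]
        exact add_le_add_right (hfar.trans (mul_le_mul_of_nonneg_left
          (measureReal_mono sdiff_subset measure_ball_lt_top.ne) (inv_nonneg.2 hr))) _
    _ = 3 * Real.pi * r := by
        have harea : volume.real (ball a r) = r ^ 2 * Real.pi := by simp [Measure.real, hr]
        rcases eq_or_ne r 0 with rfl | hr'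
        · simp
        · rw [harea]
          field_simp
          ring

section FiniteMeasure

variable (μ : Measure ℂ) [IsFiniteMeasure μ]

lemma integrable_inv_sub_prod (a : ℂ) (r : ℝ) :
    Integrable (fun p : ℂ × ℂ => (p.1 - p.2)⁻¹) ((volume.restrict (ball a r)).prod μ) := by
  have hmeas : Measurable fun p : ℂ × ℂ => (p.1 - p.2)⁻¹ := by fun_prop
  rcases lt_or_ge r 0 with hr | hr
  · simp [ball_eq_empty.2 hr.le]
  refine (integrable_prod_iff' hmeas.aestronglyMeasurable).2 ⟨.of_forall fun ξ => ?_, ?_⟩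
  · have hξ : Measurable fun z : ℂ => (z - ξ)⁻¹ := by fun_prop
    exact (integrable_norm_iff hξ.aestronglyMeasurable).1 (integrableOn_ball_norm_inv_sub a r ξ)
  · refine Integrable.of_bound (C := 3 * Real.pi * r)
      hmeas.norm.stronglyMeasurable.integral_prod_left'.aestronglyMeasurable
      (.of_forall fun ξ => ?_)
    rw [Real.norm_of_nonneg (integral_nonneg fun _ => norm_nonneg _)]
    exact setIntegral_ball_norm_inv_sub_le a hr ξ

lemma ae_integrable_inv_sub : ∀ᵐ z : ℂ, Integrable (fun ξ => (z - ξ)⁻¹) μ := by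
  have hball : ∀ᵐ z : ℂ, ∀ n : ℕ, z ∈ ball 0 (n : ℝ) → Integrable (fun ξ => (z - ξ)⁻¹) μ :=
    ae_all_iff.2 fun n =>
      (ae_restrict_iff' measurableSet_ball).1 (integrable_inv_sub_prod μ 0 n).prod_right_ae
  filter_upwards [hball] with z hz
  obtain ⟨n, hn⟩ := exists_nat_gt ‖z‖
  exact hz n (mem_ball_zero_iff.2 hn)

end FiniteMeasure

/-- The Cauchy transform `z ↦ ∫ (z - ξ)⁻¹ dμ(ξ)` of a measure, with the junk value `0` where the
kernel is not integrable. -/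
noncomputable def cauchyTransform (μ : Measure ℂ) (z : ℂ) : ℂ := ∫ ξ, (z - ξ)⁻¹ ∂μ

/-- The potential `z ↦ ∫ |z - ξ|⁻¹ dμ(ξ)`; it dominates the Cauchy transform and its
regularizations. -/
noncomputable def normPotential (μ : Measure ℂ) (z : ℂ) : ℝ := ∫ ξ, ‖(z - ξ)⁻¹‖ ∂μ

section Transforms

variable (μ : Measure ℂ)

lemma norm_cauchyTransform_le (z : ℂ) : ‖cauchyTransform μ z‖ ≤ normPotential μ z :=
  norm_integral_le_integral_norm _

variable [IsFiniteMeasure μ]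

lemma locallyIntegrable_normPotential : LocallyIntegrable (normPotential μ) := fun a =>
  ⟨ball a 1, ball_mem_nhds a one_pos, (integrable_inv_sub_prod μ a 1).integral_norm_prod_left⟩

lemma locallyIntegrable_cauchyTransform : LocallyIntegrable (cauchyTransform μ) := fun a =>
  ⟨ball a 1, ball_mem_nhds a one_pos, (integrable_inv_sub_prod μ a 1).integral_prod_left⟩

lemma aestronglyMeasurable_cauchyTransform : AEStronglyMeasurable (cauchyTransform μ) volume :=
  (locallyIntegrable_cauchyTransform μ).aestronglyMeasurable

end Transforms

lemma fderiv_eq_zero_of_notMem_tsupport {E F : Type*} [NormedAddCommGroup E] [NormedSpace ℝ E]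
    [NormedAddCommGroup F] [NormedSpace ℝ F] {ψ : E → F} {z : E} (hz : z ∉ tsupport ψ) :
    fderiv ℝ ψ z = 0 :=
  image_eq_zero_of_notMem_tsupport fun h => hz (tsupport_fderiv_subset ℝ h)

section Pompeiu

variable {F : Type*} [NormedAddCommGroup F] [NormedSpace ℝ F] [CompleteSpace F]

lemma setIntegral_Ioi_fderiv_smul_apply {E : Type*} [NormedAddCommGroup E] [NormedSpace ℝ E]
    {ψ : E → F} (hψ : ContDiff ℝ 1 ψ) (hc : HasCompactSupport ψ) {v : E} (hv : v ≠ 0) :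
    ∫ x in Ioi (0 : ℝ), fderiv ℝ ψ (x • v) v = -ψ 0 := by
  have hderiv : ∀ x : ℝ, deriv (fun x : ℝ => ψ (x • v)) x = fderiv ℝ ψ (x • v) v := fun x => by
    have hline : HasDerivAt (fun x : ℝ => x • v) v x := by
      simpa using (hasDerivAt_id x).smul_const v
    exact ((hψ.differentiable one_ne_zero _).hasFDerivAt.comp_hasDerivAt x hline).deriv
  simp_rw [← hderiv]
  have hcs : HasCompactSupport fun x : ℝ => ψ (x • v) :=
    hc.comp_isClosedEmbedding (isClosedEmbedding_smul_left hv)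
  have hline : ContDiff ℝ 1 fun x : ℝ => ψ (x • v) := hψ.comp (contDiff_smul_const v)
  simpa using hcs.integral_Ioi_deriv_eq hline 0

lemma integral_fderiv_inv_conj {ψ : ℂ → F} (hψ : ContDiff ℝ 1 ψ) (hc : HasCompactSupport ψ) :
    ∫ z, fderiv ℝ ψ z (conj z)⁻¹ = -(2 * Real.pi) • ψ 0 := by
  set e : ℝ → ℂ := fun t => Real.cos t + Real.sin t * Complex.I with he
  have norm_e : ∀ t, ‖e t‖ = 1 := fun t => by simp [he]
  have hpolar : ∀ p ∈ polarCoord.target, p.1 • fderiv ℝ ψ (Complex.polarCoord.symm p)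
      (conj (Complex.polarCoord.symm p))⁻¹ = fderiv ℝ ψ (p.1 • e p.2) (e p.2) := by
    rintro ⟨x, t⟩ hp
    have hx : x ≠ 0 := (mem_Ioi.1 hp.1).ne'
    have hsymm : Complex.polarCoord.symm (x, t) = x • e t := Complex.polarCoord_symm_apply _
    have hinv : x • (conj (x • e t))⁻¹ = e t := by
      rw [Complex.real_smul, Complex.real_smul, map_mul, Complex.conj_ofReal, mul_inv,
        ← Complex.inv_eq_conj (norm_e t), inv_inv, mul_inv_cancel_left₀ (by exact_mod_cast hx)]
    rw [hsymm, ← map_smul, hinv]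
  have hint : IntegrableOn (fun p : ℝ × ℝ => fderiv ℝ ψ (p.1 • e p.2) (e p.2))
      (Ioi 0 ×ˢ Ioo (-Real.pi) Real.pi) (volume.prod volume) := by
    obtain ⟨R, hR⟩ := hc.isCompact.isBounded.subset_closedBall 0
    have hcont : Continuous fun p : ℝ × ℝ => fderiv ℝ ψ (p.1 • e p.2) (e p.2) :=
      ((hψ.continuous_fderiv one_ne_zero).comp (by fun_prop)).clm_apply (by fun_prop)
    refine (hcont.continuousOn.integrableOn_compact (isCompact_Icc (a := (0, -Real.pi))
      (b := (R, Real.pi)))).of_forall_sdiff_eq_zero (measurableSet_Ioi.prod measurableSet_Ioo) ?_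
    rintro ⟨x, t⟩ ⟨⟨hx, ht⟩, hn⟩
    have hx : 0 < x := hx
    have hsupp : x • e t ∉ tsupport ψ := fun h => hn <| by
      have : x ≤ R := by simpa [norm_smul, norm_e, abs_of_pos hx] using hR h
      exact ⟨⟨hx.le, ht.1.le⟩, ⟨this, ht.2.le⟩⟩
    exact DFunLike.congr_fun (fderiv_eq_zero_of_notMem_tsupport hsupp) (e t)
  rw [← Complex.integral_comp_polarCoord_symm,
    setIntegral_congr_fun polarCoord.open_target.measurableSet hpolar, polarCoord_target,
    Measure.volume_eq_prod, ← Measure.prod_restrict,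
    integral_prod_symm _ (by rwa [Measure.prod_restrict])]
  have hradial : ∀ t, ∫ x in Ioi (0 : ℝ), fderiv ℝ ψ (x • e t) (e t) = -ψ 0 := fun t =>
    setIntegral_Ioi_fderiv_smul_apply hψ hc (norm_ne_zero_iff.1 (by simp [norm_e]))
  simp_rw [hradial]
  rw [setIntegral_const, Real.volume_real_Ioo_of_le (by linarith [Real.pi_pos]), smul_neg, neg_smul]
  ring_nf

lemma integral_fderiv_conj_inv_sub {ψ : ℂ → F} (hψ : ContDiff ℝ 1 ψ) (hc : HasCompactSupport ψ)
    (ξ : ℂ) : ∫ z, fderiv ℝ ψ z (conj (z - ξ)⁻¹) = -(2 * Real.pi) • ψ ξ := by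
  have h := integral_fderiv_inv_conj (ψ := fun z => ψ (z + ξ)) (by fun_prop)
    (hc.comp_homeomorph (Homeomorph.addRight ξ))
  rw [zero_add] at h
  rw [← h, ← integral_add_right_eq_self _ ξ]
  simp [fderiv_comp_add_right]

end Pompeiu

section WeakDivergence

variable {μ : Measure ℂ} [IsFiniteMeasure μ] {ψ : ℂ → ℝ}

lemma integrable_fderiv_conj_inv_sub_prod (hψ : ContDiff ℝ 1 ψ) (hc : HasCompactSupport ψ) :
    Integrable (fun p : ℂ × ℂ => fderiv ℝ ψ p.1 (conj (p.1 - p.2)⁻¹)) (volume.prod μ) := by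
  obtain ⟨R, hR⟩ := hc.isCompact.isBounded.subset_ball 0
  have hdψ : Continuous (fderiv ℝ ψ) := hψ.continuous_fderiv one_ne_zero
  obtain ⟨B, hB⟩ := hdψ.bounded_above_of_compact_support (hc.fderiv ℝ)
  have hball : IntegrableOn (fun p : ℂ × ℂ => fderiv ℝ ψ p.1 (conj (p.1 - p.2)⁻¹))
      (ball 0 R ×ˢ univ) (volume.prod μ) := by
    rw [IntegrableOn, ← Measure.prod_restrict, Measure.restrict_univ]
    refine ((integrable_inv_sub_prod μ 0 R).norm.const_mul B).mono' ?_ (.of_forall fun p => ?_)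
    · have hker : Measurable fun p : ℂ × ℂ => conj (p.1 - p.2)⁻¹ :=
        Complex.continuous_conj.measurable.comp (by fun_prop)
      have happ : Continuous fun q : (ℂ →L[ℝ] ℝ) × ℂ => q.1 q.2 := by fun_prop
      exact (happ.measurable.comp
        ((hdψ.measurable.comp measurable_fst).prodMk hker)).aestronglyMeasurable
    · refine (fderiv ℝ ψ p.1).le_of_opNorm_le_of_le (hB _) ?_
      rw [RCLike.norm_conj]
  refine (integrableOn_iff_integrable_of_support_subset fun p hp => ?_).1 hball
  have : p.1 ∈ tsupport ψ := by
    by_contra h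
    simp [fderiv_eq_zero_of_notMem_tsupport h] at hp
  exact ⟨hR this, mem_univ _⟩

theorem integral_fderiv_conj_cauchyTransform (hψ : ContDiff ℝ 1 ψ) (hc : HasCompactSupport ψ) :
    ∫ z, fderiv ℝ ψ z (conj (cauchyTransform μ z)) = -(2 * Real.pi) * ∫ ξ, ψ ξ ∂μ := by
  calc ∫ z, fderiv ℝ ψ z (conj (cauchyTransform μ z))
      = ∫ z, (∫ ξ, fderiv ℝ ψ z (conj (z - ξ)⁻¹) ∂μ) := by
        refine integral_congr_ae ?_
        filter_upwards [ae_integrable_inv_sub μ] with z hz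
        have := (fderiv ℝ ψ z ∘L Complex.conjCLE.toContinuousLinearMap).integral_comp_comm hz
        simpa [cauchyTransform] using this.symm
    _ = ∫ ξ, (∫ z, fderiv ℝ ψ z (conj (z - ξ)⁻¹)) ∂μ :=
        integral_integral_swap (integrable_fderiv_conj_inv_sub_prod hψ hc)
    _ = ∫ ξ, -(2 * Real.pi) * ψ ξ ∂μ :=
        integral_congr_ae (.of_forall fun ξ => integral_fderiv_conj_inv_sub hψ hc ξ)
    _ = -(2 * Real.pi) * ∫ ξ, ψ ξ ∂μ := integral_const_mul _ _

end WeakDivergence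

lemma ext_of_integral_contDiff {E : Type*} [NormedAddCommGroup E] [NormedSpace ℝ E]
    [FiniteDimensional ℝ E] [MeasurableSpace E] [BorelSpace E] {μ ν : Measure E}
    [IsFiniteMeasure μ] [IsFiniteMeasure ν]
    (h : ∀ ψ : E → ℝ, ContDiff ℝ 1 ψ → HasCompactSupport ψ → ∫ x, ψ x ∂μ = ∫ x, ψ x ∂ν) :
    μ = ν := by
  obtain ⟨σ, hσ, hμ, hν⟩ : ∃ σ : Measure E, IsFiniteMeasure σ ∧ μ ≪ σ ∧ ν ≪ σ :=
    ⟨μ + ν, inferInstance, Measure.AbsolutelyContinuous.rfl.add_right ν, by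
      rw [add_comm]
      exact Measure.AbsolutelyContinuous.rfl.add_right μ⟩
  have htest : ∀ ρ : Measure E, IsFiniteMeasure ρ → ρ ≪ σ → ∀ ψ : E → ℝ,
      ∫ x, ψ x • (ρ.rnDeriv σ x).toReal ∂σ = ∫ x, ψ x ∂ρ := fun ρ _ hρ ψ => by
    rw [← integral_rnDeriv_smul hρ]
    simp only [smul_eq_mul, mul_comm]
  have heq : (fun x => (μ.rnDeriv σ x).toReal) =ᵐ[σ]
      fun x => (ν.rnDeriv σ x).toReal := by
    refine ae_eq_of_integral_contDiff_smul_eq Measure.integrable_toReal_rnDeriv.locallyIntegrable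
      Measure.integrable_toReal_rnDeriv.locallyIntegrable fun ψ hψ hc => ?_
    rw [htest μ inferInstance hμ, htest ν inferInstance hν]
    exact h ψ (hψ.of_le (mod_cast le_top)) hc
  rw [← Measure.withDensity_rnDeriv_eq μ _ hμ, ← Measure.withDensity_rnDeriv_eq ν _ hν]
  refine withDensity_congr_ae ?_
  filter_upwards [heq, μ.rnDeriv_lt_top σ, ν.rnDeriv_lt_top σ] with x hx hμx hνx
  exact (ENNReal.toReal_eq_toReal_iff' hμx.ne hνx.ne).1 hx

theorem eq_of_cauchyTransform_ae_eq {μ ν : Measure ℂ} [IsFiniteMeasure μ] [IsFiniteMeasure ν]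
    (h : cauchyTransform μ =ᵐ[volume] cauchyTransform ν) : μ = ν := by
  refine ext_of_integral_contDiff fun ψ hψ hc => ?_
  have hweak : ∫ z, fderiv ℝ ψ z (conj (cauchyTransform μ z)) =
      ∫ z, fderiv ℝ ψ z (conj (cauchyTransform ν z)) := by
    refine integral_congr_ae ?_
    filter_upwards [h] with z hz
    rw [hz]
  rw [integral_fderiv_conj_cauchyTransform hψ hc, integral_fderiv_conj_cauchyTransform hψ hc]
    at hweak
  exact mul_left_cancel₀ (neg_ne_zero.2 Real.two_pi_pos.ne') hweak

lemma tendsto_inv_mul_setIntegral_ball_norm_inv_sub {a ξ : ℂ} (h : ξ ≠ a) :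
    Tendsto (fun ε : ℝ => ε⁻¹ * ∫ z in ball a ε, ‖(z - ξ)⁻¹‖) (𝓝[>] 0) (𝓝 0) := by
  have hd : 0 < ‖ξ - a‖ := norm_pos_iff.2 (sub_ne_zero.2 h)
  have hlim : Tendsto (fun ε : ℝ => 2 * Real.pi / ‖ξ - a‖ * ε) (𝓝[>] 0) (𝓝 0) :=
    ((continuous_const.mul continuous_id).tendsto' 0 0 (by simp)).mono_left nhdsWithin_le_nhds
  refine tendsto_of_tendsto_of_tendsto_of_le_of_le' tendsto_const_nhds hlim ?_ ?_
  · filter_upwards [self_mem_nhdsWithin] with ε hε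
    exact mul_nonneg (inv_nonneg.2 (mem_Ioi.1 hε).le) (integral_nonneg fun _ => norm_nonneg _)
  filter_upwards [Ioo_mem_nhdsGT (half_pos hd)] with ε hε
  have hε0 : 0 < ε := hε.1
  have hbound : ∀ z ∈ ball a ε, ‖‖(z - ξ)⁻¹‖‖ ≤ 2 / ‖ξ - a‖ := fun z hz => by
    have hdist : ‖ξ - a‖ / 2 ≤ ‖z - ξ‖ := by
      have htri : ‖ξ - a‖ ≤ ‖ξ - z‖ + ‖z - a‖ := norm_sub_le_norm_sub_add_norm_sub _ _ _
      rw [norm_sub_rev ξ z] at htri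
      linarith [hε.2, mem_ball_iff_norm.1 hz]
    rw [norm_norm, norm_inv, ← inv_div]
    gcongr
  have harea : volume.real (ball a ε) = ε ^ 2 * Real.pi := by simp [Measure.real, hε0.le]
  calc ε⁻¹ * ∫ z in ball a ε, ‖(z - ξ)⁻¹‖
      ≤ ε⁻¹ * (2 / ‖ξ - a‖ * volume.real (ball a ε)) :=
        mul_le_mul_of_nonneg_left ((Real.le_norm_self _).trans
          (norm_setIntegral_le_of_norm_le_const measure_ball_lt_top hbound)) (inv_nonneg.2 hε0.le)
    _ = 2 * Real.pi / ‖ξ - a‖ * ε := by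
        rw [harea]
        field_simp

lemma tendsto_inv_mul_setIntegral_ball_norm_cauchyTransform {μ : Measure ℂ} [IsFiniteMeasure μ]
    {a : ℂ} (ha : μ {a} = 0) :
    Tendsto (fun ε : ℝ => ε⁻¹ * ∫ z in ball a ε, ‖cauchyTransform μ z‖) (𝓝[>] 0) (𝓝 0) := by
  have hlim : Tendsto (fun ε : ℝ => ∫ ξ, ε⁻¹ * (∫ z in ball a ε, ‖(z - ξ)⁻¹‖) ∂μ)
      (𝓝[>] 0) (𝓝 0) := by
    suffices h : Tendsto (fun ε : ℝ => ∫ ξ, ε⁻¹ * (∫ z in ball a ε, ‖(z - ξ)⁻¹‖) ∂μ)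
        (𝓝[>] 0) (𝓝 (∫ _, 0 ∂μ)) by simpa using h
    refine tendsto_integral_filter_of_dominated_convergence (fun _ => 3 * Real.pi)
      (.of_forall fun ε => ?_) ?_ (integrable_const _) ?_
    · have hmeas : Measurable fun p : ℂ × ℂ => ‖(p.1 - p.2)⁻¹‖ := by fun_prop
      exact (hmeas.stronglyMeasurable.integral_prod_left'.const_mul _).aestronglyMeasurable
    · filter_upwards [self_mem_nhdsWithin] with ε hε
      have hε : 0 < ε := hε
      refine .of_forall fun ξ => ?_
      rw [Real.norm_of_nonneg (mul_nonneg (inv_nonneg.2 hε.le)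
        (integral_nonneg fun _ => norm_nonneg _)), inv_mul_le_iff₀ hε]
      linarith [setIntegral_ball_norm_inv_sub_le a hε.le ξ]
    · filter_upwards [compl_mem_ae_iff.2 ha] with ξ hξ
      exact tendsto_inv_mul_setIntegral_ball_norm_inv_sub hξ
  refine tendsto_of_tendsto_of_tendsto_of_le_of_le' tendsto_const_nhds hlim ?_ ?_
  · filter_upwards [self_mem_nhdsWithin] with ε hε
    exact mul_nonneg (inv_nonneg.2 (mem_Ioi.1 hε).le) (integral_nonneg fun _ => norm_nonneg _)
  filter_upwards [self_mem_nhdsWithin] with ε hε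
  have hker := integrable_inv_sub_prod μ a ε
  rw [integral_const_mul]
  refine mul_le_mul_of_nonneg_left ?_ (inv_nonneg.2 (mem_Ioi.1 hε).le)
  calc ∫ z in ball a ε, ‖cauchyTransform μ z‖
      ≤ ∫ z in ball a ε, normPotential μ z :=
        integral_mono hker.integral_prod_left.norm hker.integral_norm_prod_left
          (norm_cauchyTransform_le μ)
    _ = ∫ ξ, (∫ z in ball a ε, ‖(z - ξ)⁻¹‖) ∂μ := integral_integral_swap hker.norm

lemma cauchyTransform_eq_add_restrict_compl_singleton {μ : Measure ℂ} (a : ℂ) {z : ℂ}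
    (hz : Integrable (fun ξ => (z - ξ)⁻¹) μ) :
    cauchyTransform μ z = μ.real {a} * (z - a)⁻¹ + cauchyTransform (μ.restrict {a}ᶜ) z := by
  rw [cauchyTransform, ← integral_add_compl (measurableSet_singleton a) hz, integral_singleton,
    Complex.real_smul, cauchyTransform]

section Bump

variable {E : Type*} [NormedAddCommGroup E] [InnerProductSpace ℝ E]

/-- A smooth radial bump: `1` on the ball of radius `ε / 2` about `a`, `0` off the ball of radius
`ε`, and nonincreasing along rays from `a`. Unlike for `ContDiffBump`, all bumps are rescalings
of one profile, which makes the bound on the derivative uniform. -/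
noncomputable def radialBump (a : E) (ε : ℝ) (z : E) : ℝ :=
  Real.smoothTransition (2 - 2 * ‖ε⁻¹ • (z - a)‖ ^ 2)

lemma contDiff_radialBump (a : E) (ε : ℝ) : ContDiff ℝ 1 (radialBump a ε) :=
  Real.smoothTransition.contDiff.comp <| contDiff_const.sub <| contDiff_const.mul <|
    (contDiff_const.smul (contDiff_id.sub contDiff_const)).norm_sq ℝ

lemma radialBump_nonneg (a : E) (ε : ℝ) (z : E) : 0 ≤ radialBump a ε z :=
  Real.smoothTransition.nonneg _

lemma radialBump_le_one (a : E) (ε : ℝ) (z : E) : radialBump a ε z ≤ 1 :=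
  Real.smoothTransition.le_one _

lemma radialBump_eq_zero {a z : E} {ε : ℝ} (hε : 0 < ε) (hz : ε ≤ ‖z - a‖) :
    radialBump a ε z = 0 := by
  have : 1 ≤ ‖ε⁻¹ • (z - a)‖ := by
    rwa [norm_smul, norm_inv, Real.norm_of_nonneg hε.le, le_inv_mul_iff₀ hε, mul_one]
  exact Real.smoothTransition.zero_of_nonpos (by nlinarith)

lemma radialBump_eq_one {a z : E} {ε : ℝ} (hε : 0 < ε) (hz : ‖z - a‖ ≤ ε / 2) :
    radialBump a ε z = 1 := by
  have : ‖ε⁻¹ • (z - a)‖ ≤ 1 / 2 := by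
    rw [norm_smul, norm_inv, Real.norm_of_nonneg hε.le, inv_mul_le_iff₀ hε]
    linarith
  exact Real.smoothTransition.one_of_one_le (by nlinarith [norm_nonneg (ε⁻¹ • (z - a))])

lemma fderiv_radialBump_eq_zero {a z : E} {ε : ℝ} (hε : 0 < ε) (hz : ε ≤ ‖z - a‖) :
    fderiv ℝ (radialBump a ε) z = 0 :=
  IsLocalMin.fderiv_eq_zero <| .of_forall fun w => by
    rw [radialBump_eq_zero hε hz]
    exact radialBump_nonneg a ε w

lemma fderiv_radialBump_eq_zero_of_norm_le {a z : E} {ε : ℝ} (hε : 0 < ε)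
    (hz : ‖z - a‖ ≤ ε / 2) : fderiv ℝ (radialBump a ε) z = 0 :=
  IsLocalMax.fderiv_eq_zero <| .of_forall fun w => by
    rw [radialBump_eq_one hε hz]
    exact radialBump_le_one a ε w

lemma hasCompactSupport_radialBump [ProperSpace E] (a : E) {ε : ℝ} (hε : 0 < ε) :
    HasCompactSupport (radialBump a ε) :=
  .of_support_subset_isCompact (isCompact_closedBall a ε) fun z hz => by
    rw [mem_closedBall_iff_norm]
    by_contra! h
    exact hz (radialBump_eq_zero hε h.le)

lemma fderiv_radialBump (a : E) (ε : ℝ) (z : E) :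
    fderiv ℝ (radialBump a ε) z = ε⁻¹ • fderiv ℝ (radialBump 0 1) (ε⁻¹ • (z - a)) := by
  have hscale : radialBump a ε = fun z => radialBump 0 1 (ε⁻¹ • (z - a)) := by
    ext z
    simp [radialBump]
  rw [hscale, fderiv_comp_sub (f := fun z => radialBump 0 1 (ε⁻¹ • z)), fderiv_comp_smul]

lemma exists_norm_fderiv_radialBump_le [ProperSpace E] :
    ∃ D, ∀ (a : E) (ε : ℝ), 0 < ε → ∀ z, ‖fderiv ℝ (radialBump a ε) z‖ ≤ ε⁻¹ * D := by
  have hcont : Continuous (fderiv ℝ (radialBump (0 : E) 1)) :=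
    (contDiff_radialBump 0 1).continuous_fderiv one_ne_zero
  obtain ⟨D, hD⟩ := hcont.bounded_above_of_compact_support
    ((hasCompactSupport_radialBump 0 one_pos).fderiv ℝ)
  refine ⟨D, fun a ε hε z => ?_⟩
  rw [fderiv_radialBump, norm_smul, norm_inv, Real.norm_of_nonneg hε.le]
  exact mul_le_mul_of_nonneg_left (hD _) (inv_nonneg.2 hε.le)

lemma setIntegral_ball_fderiv_radialBump_apply [MeasurableSpace E] (m : Measure E) (V : E → E)
    (a : E) {ε : ℝ} (hε : 0 < ε) :
    ∫ z in ball a ε, fderiv ℝ (radialBump a ε) z (V z) ∂m =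
      ∫ z, fderiv ℝ (radialBump a ε) z (V z) ∂m :=
  setIntegral_eq_integral_of_forall_compl_eq_zero fun z hz => by
    rw [fderiv_radialBump_eq_zero hε (by simpa [dist_eq_norm] using hz), zero_apply]

lemma fderiv_radialBump_apply_sub_nonpos (a : E) (ε : ℝ) (z : E) :
    fderiv ℝ (radialBump a ε) z (z - a) ≤ 0 := by
  have hprofile : ∀ w : E, fderiv ℝ (radialBump 0 1) w w =
      -(4 * (deriv Real.smoothTransition (2 - 2 * ‖w‖ ^ 2) * ‖w‖ ^ 2)) := fun w => by
    have hinner : HasFDerivAt (fun w : E => 2 - 2 * ‖w‖ ^ 2) _ w :=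
      ((hasFDerivAt_id w).norm_sq.const_mul 2).const_sub 2
    have houter : HasDerivAt Real.smoothTransition _ (2 - 2 * ‖w‖ ^ 2) :=
      ((Real.smoothTransition.contDiff (n := 1)).differentiable one_ne_zero _).hasDerivAt
    have hcomp : radialBump (0 : E) 1 = Real.smoothTransition ∘ fun w => 2 - 2 * ‖w‖ ^ 2 := by
      ext w
      simp [radialBump]
    rw [hcomp, (houter.comp_hasFDerivAt w hinner).fderiv]
    simp
    ring
  have hray : fderiv ℝ (radialBump a ε) z (z - a) =
      fderiv ℝ (radialBump 0 1) (ε⁻¹ • (z - a)) (ε⁻¹ • (z - a)) := by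
    rw [fderiv_radialBump, map_smul, smul_apply]
  rw [hray, hprofile, neg_nonpos]
  have := Real.smoothTransition.monotone.deriv_nonneg (x := 2 - 2 * ‖ε⁻¹ • (z - a)‖ ^ 2)
  positivity

end Bump

lemma conj_inv_eq_smul (z : ℂ) : conj z⁻¹ = (‖z‖ ^ 2)⁻¹ • z := by
  rw [Complex.inv_def, map_mul, Complex.conj_conj, Complex.conj_ofReal, Complex.normSq_eq_norm_sq,
    Complex.real_smul, mul_comm]

lemma fderiv_radialBump_conj_inv_sub_nonpos (a : ℂ) (ε : ℝ) (z : ℂ) :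
    fderiv ℝ (radialBump a ε) z (conj (z - a)⁻¹) ≤ 0 := by
  rw [conj_inv_eq_smul, map_smul]
  exact mul_nonpos_of_nonneg_of_nonpos (by positivity) (fderiv_radialBump_apply_sub_nonpos a ε z)

/-- `w n` are `C¹` functions converging almost everywhere to `u`, with derivatives converging
almost everywhere to `L` under a locally integrable bound. This stands in for "`u` is locally
Sobolev `W^{1,1}` with weak derivative `L`". -/
structure IsC1Approx {E : Type*} [NormedAddCommGroup E] [NormedSpace ℝ E] [MeasurableSpace E]
    (m : Measure E) (w : ℕ → E → ℝ) (u : E → ℝ) (L : E → E →L[ℝ] ℝ) : Prop where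
  contDiff : ∀ n, ContDiff ℝ 1 (w n)
  tendsto : ∀ᵐ x ∂m, Tendsto (fun n => w n x) atTop (𝓝 (u x))
  tendsto_fderiv : ∀ᵐ x ∂m, Tendsto (fun n => fderiv ℝ (w n) x) atTop (𝓝 (L x))
  bound : ∃ g : E → ℝ, LocallyIntegrable g m ∧ ∀ n, ∀ᵐ x ∂m, ‖fderiv ℝ (w n) x‖ ≤ g x

/-- The logarithmic potential `z ↦ ∫ log |z - ξ| dμ(ξ)` of a measure. -/
noncomputable def logPotential (μ : Measure ℂ) (z : ℂ) : ℝ := ∫ ξ, Real.log ‖z - ξ‖ ∂μ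

/-- The logarithmic potential regularized at scale `δ`, which is of class `C¹` for `δ ≠ 0`. -/
noncomputable def regLogPotential (μ : Measure ℂ) (δ : ℝ) (z : ℂ) : ℝ :=
  ∫ ξ, Real.log (‖z - ξ‖ ^ 2 + δ ^ 2) / 2 ∂μ

/-- The gradient at `w` of the regularized logarithmic kernel `log (|w|² + δ²) / 2`. -/
noncomputable def regKernel (δ : ℝ) (w : ℂ) : ℂ := (‖w‖ ^ 2 + δ ^ 2)⁻¹ • w

lemma norm_regKernel_le_norm_inv (δ : ℝ) (w : ℂ) : ‖regKernel δ w‖ ≤ ‖w⁻¹‖ := by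
  rcases eq_or_ne w 0 with rfl | hw
  · simp [regKernel]
  have hw : 0 < ‖w‖ := norm_pos_iff.2 hw
  rw [regKernel, norm_smul, norm_inv, norm_inv, Real.norm_of_nonneg (by positivity),
    inv_mul_le_iff₀ (by positivity), le_mul_inv_iff₀ hw]
  nlinarith [sq_nonneg δ]

lemma norm_regKernel_le_abs_inv {δ : ℝ} (hδ : δ ≠ 0) (w : ℂ) : ‖regKernel δ w‖ ≤ |δ|⁻¹ := by
  have hδ' : 0 < |δ| := abs_pos.2 hδ
  rw [regKernel, norm_smul, norm_inv, ← sq_abs δ, Real.norm_of_nonneg (by positivity),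
    inv_mul_le_iff₀ (by positivity), le_mul_inv_iff₀ hδ']
  nlinarith [sq_nonneg (‖w‖ - |δ|), norm_nonneg w]

lemma continuous_regKernel {δ : ℝ} (hδ : δ ≠ 0) : Continuous (regKernel δ) := by
  have hden : Continuous fun w : ℂ => ‖w‖ ^ 2 + δ ^ 2 := by fun_prop
  exact (hden.inv₀ fun w => by positivity).smul continuous_id

lemma measurable_regKernel (δ : ℝ) : Measurable (regKernel δ) := by
  unfold regKernel
  fun_prop

lemma tendsto_regKernel (w : ℂ) :
    Tendsto (fun δ : ℝ => regKernel δ w) (𝓝 0) (𝓝 (conj w⁻¹)) := by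
  rcases eq_or_ne w 0 with rfl | hw
  · simp [regKernel]
  have hden : ContinuousAt (fun δ : ℝ => ‖w‖ ^ 2 + δ ^ 2) 0 := by fun_prop
  have hcont : ContinuousAt (fun δ : ℝ => regKernel δ w) 0 :=
    (hden.inv₀ (by simpa using hw)).smul continuousAt_const
  rw [conj_inv_eq_smul]
  simpa [regKernel] using hcont.tendsto

lemma hasFDerivAt_log_sq_add_sq_div_two {δ : ℝ} (hδ : δ ≠ 0) (ξ z : ℂ) :
    HasFDerivAt (fun z : ℂ => Real.log (‖z - ξ‖ ^ 2 + δ ^ 2) / 2)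
      (innerSL ℝ (regKernel δ (z - ξ))) z := by
  have hlog := ((((hasFDerivAt_id z).sub_const ξ).norm_sq.add_const (δ ^ 2)).log
    (by positivity)).mul_const 2⁻¹
  simp_rw [div_eq_mul_inv]
  refine hlog.congr_fderiv ?_
  ext v
  simp only [id_eq, smul_apply, ContinuousLinearMap.comp_apply, ContinuousLinearMap.id_apply,
    innerSL_apply_apply, regKernel, real_inner_smul_left, smul_eq_mul, nsmul_eq_mul]
  ring

lemma abs_log_sq_add_sq_div_two_le {s δ : ℝ} (hs : 0 < s) (hδ : |δ| ≤ 1) :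
    |Real.log (s ^ 2 + δ ^ 2) / 2| ≤ s ^ 2 + s⁻¹ := by
  have hδ2 : δ ^ 2 ≤ 1 := (sq_le_one_iff_abs_le_one δ).2 hδ
  have hupper : Real.log (s ^ 2 + δ ^ 2) ≤ s ^ 2 + δ ^ 2 - 1 :=
    Real.log_le_sub_one_of_pos (by positivity)
  have hlower : 2 * Real.log s ≤ Real.log (s ^ 2 + δ ^ 2) := by
    rw [← Real.log_rpow hs, Real.rpow_two]
    exact Real.log_le_log (by positivity) (by nlinarith [sq_nonneg δ])
  have hinv : -Real.log s ≤ s⁻¹ - 1 := by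
    rw [← Real.log_inv]
    exact Real.log_le_sub_one_of_pos (by positivity)
  have : 0 < s⁻¹ := by positivity
  rw [abs_le]
  constructor <;> nlinarith

section LogPotential

variable {μ : Measure ℂ}

lemma tendsto_integral_regKernel {z : ℂ} (hz : Integrable (fun ξ => (z - ξ)⁻¹) μ) :
    Tendsto (fun δ => ∫ ξ, regKernel δ (z - ξ) ∂μ) (𝓝 0) (𝓝 (conj (cauchyTransform μ z))) := by
  rw [cauchyTransform, ← integral_conj]
  exact tendsto_integral_filter_of_dominated_convergence _
    (.of_forall fun δ => ((measurable_regKernel δ).comp (by fun_prop)).aestronglyMeasurable)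
    (.of_forall fun δ => .of_forall fun ξ => norm_regKernel_le_norm_inv δ _) hz.norm
    (.of_forall fun ξ => tendsto_regKernel _)

variable [IsFiniteMeasure μ]

lemma ae_measure_singleton_eq_zero : ∀ᵐ z : ℂ, μ {z} = 0 := by
  have hcount : {z : ℂ | 0 < μ {z}}.Countable :=
    Measure.countable_meas_pos_of_disjoint_iUnion (fun z => measurableSet_singleton z)
      fun z w hzw => disjoint_singleton.2 hzw
  filter_upwards [hcount.ae_notMem volume] with z hz
  simpa using hz

lemma integrable_of_continuous_of_ae_norm_le {E F : Type*} [NormedAddCommGroup E] [ProperSpace E]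
    [MeasurableSpace E] [BorelSpace E] [NormedAddCommGroup F] {μ : Measure E} [IsFiniteMeasure μ]
    {r : ℝ} (hμ : ∀ᵐ ξ ∂μ, ‖ξ‖ ≤ r) {f : E → F} (hf : Continuous f) : Integrable f μ := by
  rw [← Measure.restrict_eq_self_of_ae_mem (hμ.mono fun ξ => mem_closedBall_zero_iff.2)]
  exact hf.continuousOn.integrableOn_compact (isCompact_closedBall 0 r)

variable {r : ℝ}

lemma hasFDerivAt_regLogPotential (hμ : ∀ᵐ ξ ∂μ, ‖ξ‖ ≤ r) {δ : ℝ} (hδ : δ ≠ 0) (z : ℂ) :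
    HasFDerivAt (regLogPotential μ δ) (innerSL ℝ (∫ ξ, regKernel δ (z - ξ) ∂μ)) z := by
  have hker : ∀ z, Continuous fun ξ => regKernel δ (z - ξ) := fun z =>
    (continuous_regKernel hδ).comp (by fun_prop)
  have hlog : ∀ z : ℂ, Continuous fun ξ => Real.log (‖z - ξ‖ ^ 2 + δ ^ 2) / 2 := fun z =>
    (Continuous.log (by fun_prop) fun ξ => by positivity).div_const 2
  rw [← (innerSL ℝ).integral_comp_comm (integrable_of_continuous_of_ae_norm_le hμ (hker z))]
  refine hasFDerivAt_integral_of_dominated_of_fderiv_le univ_mem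
    (.of_forall fun z => (hlog z).aestronglyMeasurable)
    (integrable_of_continuous_of_ae_norm_le hμ (hlog z))
    ((innerSL ℝ).continuous.comp (hker z)).aestronglyMeasurable
    (.of_forall fun ξ z _ => ?_) (integrable_const |δ|⁻¹)
    (.of_forall fun ξ z _ => hasFDerivAt_log_sq_add_sq_div_two hδ ξ z)
  rw [innerSL_apply_norm]
  exact norm_regKernel_le_abs_inv hδ _

lemma contDiff_regLogPotential (hμ : ∀ᵐ ξ ∂μ, ‖ξ‖ ≤ r) {δ : ℝ} (hδ : δ ≠ 0) :
    ContDiff ℝ 1 (regLogPotential μ δ) := by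
  have hcont : Continuous fun z => ∫ ξ, regKernel δ (z - ξ) ∂μ :=
    continuous_of_dominated (bound := fun _ => |δ|⁻¹)
      (fun z => ((measurable_regKernel δ).comp (by fun_prop)).aestronglyMeasurable)
      (fun z => .of_forall fun ξ => norm_regKernel_le_abs_inv hδ _) (integrable_const _)
      (.of_forall fun ξ => (continuous_regKernel hδ).comp (by fun_prop))
  refine contDiff_one_iff_fderiv.2
    ⟨fun z => (hasFDerivAt_regLogPotential hμ hδ z).differentiableAt, ?_⟩
  rw [funext fun z => (hasFDerivAt_regLogPotential hμ hδ z).fderiv]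
  exact (innerSL ℝ).continuous.comp hcont

lemma tendsto_regLogPotential (hμ : ∀ᵐ ξ ∂μ, ‖ξ‖ ≤ r) {z : ℂ}
    (hz : Integrable (fun ξ => (z - ξ)⁻¹) μ) (hz₀ : μ {z} = 0) :
    Tendsto (fun δ => regLogPotential μ δ z) (𝓝 0) (𝓝 (logPotential μ z)) := by
  have hne : ∀ᵐ ξ ∂μ, z - ξ ≠ 0 := by
    filter_upwards [compl_mem_ae_iff.2 hz₀] with ξ hξ
    exact sub_ne_zero.2 (Ne.symm hξ)
  have hbound : Integrable (fun ξ => ‖z - ξ‖ ^ 2 + ‖z - ξ‖⁻¹) μ :=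
    (integrable_of_continuous_of_ae_norm_le hμ (by fun_prop)).add (by simpa using hz.norm)
  refine tendsto_integral_filter_of_dominated_convergence _
    (.of_forall fun δ => Measurable.aestronglyMeasurable (by fun_prop)) ?_ hbound ?_
  · filter_upwards [closedBall_mem_nhds (0 : ℝ) one_pos] with δ hδ
    filter_upwards [hne] with ξ hξ
    exact abs_log_sq_add_sq_div_two_le (norm_pos_iff.2 hξ) (by simpa using hδ)
  · filter_upwards [hne] with ξ hξ
    have hcont : ContinuousAt (fun δ : ℝ => Real.log (‖z - ξ‖ ^ 2 + δ ^ 2) / 2) 0 :=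
      (ContinuousAt.log (by fun_prop) (by simpa using hξ)).div_const 2
    simpa [Real.log_pow] using hcont.tendsto

theorem isC1Approx_logPotential (hμ : ∀ᵐ ξ ∂μ, ‖ξ‖ ≤ r) :
    IsC1Approx volume (fun n : ℕ => regLogPotential μ (1 / (n + 1))) (logPotential μ)
      fun z => innerSL ℝ (conj (cauchyTransform μ z)) := by
  have hδ : ∀ n : ℕ, (1 / (n + 1) : ℝ) ≠ 0 := fun n => by positivity
  have hlim := tendsto_one_div_add_atTop_nhds_zero_nat (𝕜 := ℝ)
  refine ⟨fun n => contDiff_regLogPotential hμ (hδ n), ?_, ?_, normPotential μ,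
    locallyIntegrable_normPotential μ, fun n => ?_⟩
  · filter_upwards [ae_integrable_inv_sub μ, ae_measure_singleton_eq_zero (μ := μ)] with z hz hz₀
    exact (tendsto_regLogPotential hμ hz hz₀).comp hlim
  · filter_upwards [ae_integrable_inv_sub μ] with z hz
    simp_rw [(hasFDerivAt_regLogPotential hμ (hδ _) z).fderiv]
    exact ((innerSL ℝ).continuous.tendsto _).comp ((tendsto_integral_regKernel hz).comp hlim)
  · filter_upwards [ae_integrable_inv_sub μ] with z hz
    rw [(hasFDerivAt_regLogPotential hμ (hδ n) z).fderiv, innerSL_apply_norm]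
    exact norm_integral_le_of_norm_le hz.norm (.of_forall fun ξ => norm_regKernel_le_norm_inv _ _)

end LogPotential

namespace IsC1Approx

section

variable {E : Type*} [NormedAddCommGroup E] [NormedSpace ℝ E] [MeasurableSpace E]
  {m : Measure E} {w w' : ℕ → E → ℝ} {u u' : E → ℝ} {L L' : E → E →L[ℝ] ℝ}

lemma sub (h : IsC1Approx m w u L) (h' : IsC1Approx m w' u' L') :
    IsC1Approx m (fun n => w n - w' n) (u - u') (L - L') := by
  obtain ⟨g, hg, hwg⟩ := h.bound
  obtain ⟨g', hg', hwg'⟩ := h'.bound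
  have hfderiv : ∀ n x, fderiv ℝ (w n - w' n) x = fderiv ℝ (w n) x - fderiv ℝ (w' n) x :=
    fun n x => fderiv_sub ((h.contDiff n).differentiable one_ne_zero x)
      ((h'.contDiff n).differentiable one_ne_zero x)
  refine ⟨fun n => (h.contDiff n).sub (h'.contDiff n), ?_, ?_, g + g', hg.add hg', fun n => ?_⟩
  · filter_upwards [h.tendsto, h'.tendsto] with x hx hx' using hx.sub hx'
  · filter_upwards [h.tendsto_fderiv, h'.tendsto_fderiv] with x hx hx'
    simpa only [hfderiv, Pi.sub_apply] using hx.sub hx'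
  · filter_upwards [hwg n, hwg' n] with x hx hx'
    rw [hfderiv]
    exact (norm_sub_le _ _).trans (add_le_add hx hx')

lemma mul_comp [IsLocallyFiniteMeasure m] (h : IsC1Approx m w u L) {χ : E → ℝ}
    (hχ : ContDiff ℝ 1 χ) (hc : HasCompactSupport χ) {Φ : ℝ → ℝ} (hΦ : ContDiff ℝ 1 Φ) {A A' : ℝ}
    (hA : ∀ t, |Φ t| ≤ A) (hA' : ∀ t, |deriv Φ t| ≤ A') :
    IsC1Approx m (fun n x => χ x * Φ (w n x)) (fun x => χ x * Φ (u x))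
      fun x => (χ x * deriv Φ (u x)) • L x + Φ (u x) • fderiv ℝ χ x := by
  obtain ⟨X, hX⟩ := hχ.continuous.bounded_above_of_compact_support hc
  obtain ⟨D, hD⟩ :=
    (hχ.continuous_fderiv one_ne_zero).bounded_above_of_compact_support (hc.fderiv ℝ)
  obtain ⟨g, hg, hwg⟩ := h.bound
  have hfderiv : ∀ n x, fderiv ℝ (fun x => χ x * Φ (w n x)) x =
      (χ x * deriv Φ (w n x)) • fderiv ℝ (w n) x + Φ (w n x) • fderiv ℝ χ x := fun n x => by
    have hcomp := ((hΦ.differentiable one_ne_zero (w n x)).hasDerivAt).comp_hasFDerivAt x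
      ((h.contDiff n).differentiable one_ne_zero x).hasFDerivAt
    rw [mul_smul]
    exact ((hχ.differentiable one_ne_zero x).hasFDerivAt.mul hcomp).fderiv
  refine ⟨fun n => hχ.mul (hΦ.comp (h.contDiff n)), ?_, ?_,
    fun x => X * A' * g x + A * D, (hg.smul (X * A')).add (locallyIntegrable_const _),
    fun n => ?_⟩
  · filter_upwards [h.tendsto] with x hx
    exact ((hΦ.continuous.tendsto _).comp hx).const_mul _
  · filter_upwards [h.tendsto, h.tendsto_fderiv] with x hx hx'
    simp_rw [hfderiv]
    exact ((((hΦ.continuous_deriv le_rfl).tendsto _).comp hx).const_mul _ |>.smul hx').add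
      (((hΦ.continuous.tendsto _).comp hx).smul_const _)
  · filter_upwards [hwg n] with x hx
    rw [hfderiv]
    refine (norm_add_le _ _).trans ?_
    rw [norm_smul, norm_smul, norm_mul]
    have hX₀ := (norm_nonneg _).trans (hX x)
    have hA₀ := (abs_nonneg _).trans (hA 0)
    have hA₀' := (abs_nonneg _).trans (hA' 0)
    gcongr
    exacts [hX x, hA' _, hA _, hD x]

lemma ae_tendsto_fderiv_apply (h : IsC1Approx m w u L) (V : E → E) :
    ∀ᵐ x ∂m, Tendsto (fun n => fderiv ℝ (w n) x (V x)) atTop (𝓝 (L x (V x))) := by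
  filter_upwards [h.tendsto_fderiv] with x hx
  exact ((continuous_eval_const (V x)).tendsto _).comp hx

variable [OpensMeasurableSpace E]

lemma aestronglyMeasurable (h : IsC1Approx m w u L) : AEStronglyMeasurable u m :=
  aestronglyMeasurable_of_tendsto_ae atTop
    (fun n => (h.contDiff n).continuous.aestronglyMeasurable) h.tendsto

section

variable {K : Set E} {V : E → E} {B : ℝ}

lemma exists_integrable_norm_fderiv_apply_le (h : IsC1Approx m w u L) (hK : IsCompact K)
    (hw : ∀ n, tsupport (w n) ⊆ K) (hB : ∀ᵐ x ∂m, x ∈ K → ‖V x‖ ≤ B) :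
    ∃ g, Integrable g m ∧ ∀ n, ∀ᵐ x ∂m, ‖fderiv ℝ (w n) x (V x)‖ ≤ g x := by
  obtain ⟨g, hg, hwg⟩ := h.bound
  refine ⟨K.indicator fun x => g x * B, ?_, fun n => ?_⟩
  · rw [integrable_indicator_iff hK.measurableSet]
    exact (hg.integrableOn_isCompact hK).mul_const B
  · filter_upwards [hB, hwg n] with x hBx hgx
    by_cases hx : x ∈ K
    · rw [indicator_of_mem hx]
      exact (ContinuousLinearMap.le_opNorm _ _).trans
        (mul_le_mul hgx (hBx hx) (norm_nonneg _) ((norm_nonneg _).trans hgx))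
    · rw [indicator_of_notMem hx, fderiv_eq_zero_of_notMem_tsupport fun hx' => hx (hw n hx')]
      simp

variable [SecondCountableTopology E]

lemma aestronglyMeasurable_fderiv_apply (h : IsC1Approx m w u L) (hV : AEStronglyMeasurable V m)
    (n : ℕ) : AEStronglyMeasurable (fun x => fderiv ℝ (w n) x (V x)) m :=
  isBoundedBilinearMap_apply.continuous.comp_aestronglyMeasurable₂
    ((h.contDiff n).continuous_fderiv one_ne_zero).aestronglyMeasurable hV

lemma integrable_apply (h : IsC1Approx m w u L) (hK : IsCompact K)
    (hw : ∀ n, tsupport (w n) ⊆ K) (hV : AEStronglyMeasurable V m)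
    (hB : ∀ᵐ x ∂m, x ∈ K → ‖V x‖ ≤ B) : Integrable (fun x => L x (V x)) m := by
  obtain ⟨g, hg, hwg⟩ := h.exists_integrable_norm_fderiv_apply_le hK hw hB
  have hlim := h.ae_tendsto_fderiv_apply V
  refine hg.mono' (aestronglyMeasurable_of_tendsto_ae atTop
    (h.aestronglyMeasurable_fderiv_apply hV) hlim) ?_
  filter_upwards [hlim, ae_all_iff.2 hwg] with x hx hgx
  exact le_of_tendsto' hx.norm hgx

lemma tendsto_integral_fderiv_apply (h : IsC1Approx m w u L) (hK : IsCompact K)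
    (hw : ∀ n, tsupport (w n) ⊆ K) (hV : AEStronglyMeasurable V m)
    (hB : ∀ᵐ x ∂m, x ∈ K → ‖V x‖ ≤ B) :
    Tendsto (fun n => ∫ x, fderiv ℝ (w n) x (V x) ∂m) atTop (𝓝 (∫ x, L x (V x) ∂m)) := by
  obtain ⟨g, hg, hwg⟩ := h.exists_integrable_norm_fderiv_apply_le hK hw hB
  exact tendsto_integral_of_dominated_convergence g (h.aestronglyMeasurable_fderiv_apply hV) hg
    hwg (h.ae_tendsto_fderiv_apply V)

end

end

lemma integral_apply_conj_cauchyTransform_le {w : ℕ → ℂ → ℝ} {u : ℂ → ℝ} {L : ℂ → ℂ →L[ℝ] ℝ}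
    (h : IsC1Approx volume w u L) {K : Set ℂ} (hK : IsCompact K)
    (hw : ∀ n, tsupport (w n) ⊆ K) {ρ : Measure ℂ} [IsFiniteMeasure ρ] {B c : ℝ}
    (hB : ∀ᵐ z, z ∈ K → ‖cauchyTransform ρ z‖ ≤ B) (hc : ∀ n z, -c ≤ w n z) :
    ∫ z, L z (conj (cauchyTransform ρ z)) ≤ 2 * Real.pi * c * ρ.real univ := by
  have hV : AEStronglyMeasurable (fun z => conj (cauchyTransform ρ z)) volume :=
    Complex.continuous_conj.comp_aestronglyMeasurable (aestronglyMeasurable_cauchyTransform ρ)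
  refine le_of_tendsto' (h.tendsto_integral_fderiv_apply hK hw hV (by simpa using hB))
    fun n => ?_
  have hsupp : HasCompactSupport (w n) := hK.of_isClosed_subset (isClosed_tsupport _) (hw n)
  have hlow : -c * ρ.real univ ≤ ∫ z, w n z ∂ρ := by
    calc -c * ρ.real univ = ∫ _, -c ∂ρ := by rw [integral_const, smul_eq_mul, mul_comm]
      _ ≤ ∫ z, w n z ∂ρ := integral_mono (integrable_const _)
        ((h.contDiff n).continuous.integrable_of_hasCompactSupport hsupp) (hc n)
  rw [integral_fderiv_conj_cauchyTransform (h.contDiff n) hsupp]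
  nlinarith [Real.pi_pos]

end IsC1Approx

section Asymptotics

open Bornology Asymptotics

lemma neBot_cobounded_inf_ae {E : Type*} [PseudoMetricSpace E] [ProperSpace E]
    [MeasurableSpace E] {m : Measure E} [IsFiniteMeasureOnCompacts m] (hm : m univ = ∞) :
    (cobounded E ⊓ ae m).NeBot := by
  refine inf_neBot_iff.2 fun s hs t ht => ?_
  by_contra hst
  have hcover : m univ ≤ m sᶜ + m tᶜ := (measure_mono fun x _ => by
    by_contra hx
    exact hst ⟨x, by simpa [not_or] using hx⟩).trans (measure_union_le _ _)
  rw [mem_ae_iff.1 ht, add_zero, hm, top_le_iff] at hcover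
  exact (isBounded_def.2 (by rwa [compl_compl])).measure_lt_top.ne hcover

lemma isCountablyGenerated_cobounded (E : Type*) [SeminormedAddGroup E] :
    (cobounded E).IsCountablyGenerated := by
  rw [← comap_norm_atTop]
  infer_instance

lemma tendsto_one_sub_div_cobounded (ξ : ℂ) : Tendsto (fun z => 1 - ξ / z) (cobounded ℂ) (𝓝 1) := by
  simpa [div_eq_mul_inv] using (tendsto_inv₀_cobounded.const_mul ξ).const_sub 1

lemma norm_one_sub_div_mem_Icc {r : ℝ} {z ξ : ℂ} (hz : 2 * r < ‖z‖) (hξ : ‖ξ‖ ≤ r) :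
    ‖1 - ξ / z‖ ∈ Icc (1 / 2) (3 / 2) := by
  have hdiv : ‖ξ / z‖ ≤ 1 / 2 := by
    rw [norm_div, div_le_iff₀ (by linarith [norm_nonneg ξ])]
    linarith
  have hlower := norm_sub_norm_le 1 (ξ / z)
  have hupper := norm_sub_le 1 (ξ / z)
  rw [norm_one] at hlower hupper
  constructor <;> linarith

lemma abs_log_le_one_of_mem_Icc {t : ℝ} (ht : t ∈ Icc (1 / 2) (3 / 2)) : |Real.log t| ≤ 1 := by
  obtain ⟨hlower, hupper⟩ := ht
  have ht₀ : 0 < t := by linarith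
  have hinv : t⁻¹ ≤ 2 := inv_le_of_inv_le₀ two_pos (by linarith)
  have hlog := Real.one_sub_inv_le_log_of_pos ht₀
  have hlog' := Real.log_le_sub_one_of_pos ht₀
  rw [abs_le]
  constructor <;> linarith

variable {ρ : Measure ℂ} [IsFiniteMeasure ρ] {r : ℝ}

lemma tendsto_mul_cauchyTransform_cobounded (hρ : ∀ᵐ ξ ∂ρ, ‖ξ‖ ≤ r) :
    Tendsto (fun z => z * cauchyTransform ρ z) (cobounded ℂ) (𝓝 (ρ.real univ)) := by
  have := isCountablyGenerated_cobounded ℂ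
  have hlarge := (tendsto_norm_cobounded_atTop (E := ℂ)).eventually_gt_atTop
  have hkey : Tendsto (fun z => ∫ ξ, (1 - ξ / z)⁻¹ ∂ρ) (cobounded ℂ) (𝓝 (∫ _, 1 ∂ρ)) := by
    refine tendsto_integral_filter_of_dominated_convergence (fun _ => 2)
      (.of_forall fun z => Measurable.aestronglyMeasurable (by fun_prop)) ?_
      (integrable_const _) (.of_forall fun ξ => ?_)
    · filter_upwards [hlarge (2 * r)] with z hz
      filter_upwards [hρ] with ξ hξ
      rw [norm_inv]
      exact inv_le_of_inv_le₀ two_pos (by simpa using (norm_one_sub_div_mem_Icc hz hξ).1)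
    · simpa using (tendsto_one_sub_div_cobounded ξ).inv₀ one_ne_zero
  simp only [integral_const, Complex.real_smul, mul_one] at hkey
  refine hkey.congr' ?_
  filter_upwards [hlarge 0] with z hz
  have hz₀ : z ≠ 0 := norm_pos_iff.1 hz
  rw [cauchyTransform, ← integral_const_mul]
  refine integral_congr_ae (.of_forall fun ξ => ?_)
  simp only
  rw [one_sub_div hz₀, inv_div, div_eq_mul_inv]

lemma cauchyTransform_isBigO_cobounded (hρ : ∀ᵐ ξ ∂ρ, ‖ξ‖ ≤ r) :
    cauchyTransform ρ =O[cobounded ℂ] fun z => z⁻¹ := by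
  have h := (tendsto_mul_cauchyTransform_cobounded hρ).isBigO_one ℂ
  refine ((isBigO_refl (fun z : ℂ => z⁻¹) _).mul h).congr' ?_ (.of_forall fun z => mul_one _)
  filter_upwards [(tendsto_norm_cobounded_atTop (E := ℂ)).eventually_gt_atTop 0] with z hz
  exact inv_mul_cancel_left₀ (norm_pos_iff.1 hz) _

lemma tendsto_logPotential_sub_log_cobounded (hρ : ∀ᵐ ξ ∂ρ, ‖ξ‖ ≤ r) :
    Tendsto (fun z => logPotential ρ z - ρ.real univ * Real.log ‖z‖) (cobounded ℂ) (𝓝 0) := by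
  have := isCountablyGenerated_cobounded ℂ
  have hlarge := (tendsto_norm_cobounded_atTop (E := ℂ)).eventually_gt_atTop
  have hbound : ∀ z : ℂ, 2 * r < ‖z‖ → ∀ᵐ ξ ∂ρ, ‖Real.log ‖1 - ξ / z‖‖ ≤ 1 := fun z hz => by
    filter_upwards [hρ] with ξ hξ
    exact abs_log_le_one_of_mem_Icc (norm_one_sub_div_mem_Icc hz hξ)
  have hint : ∀ z : ℂ, 2 * r < ‖z‖ → Integrable (fun ξ => Real.log ‖1 - ξ / z‖) ρ := fun z hz =>
    (integrable_const 1).mono' (Measurable.aestronglyMeasurable (by fun_prop)) (hbound z hz)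
  have hkey : Tendsto (fun z => ∫ ξ, Real.log ‖1 - ξ / z‖ ∂ρ) (cobounded ℂ) (𝓝 0) := by
    rw [← integral_zero ℂ ℝ]
    refine tendsto_integral_filter_of_dominated_convergence (fun _ => 1)
      (.of_forall fun z => Measurable.aestronglyMeasurable (by fun_prop)) ?_
      (integrable_const _) (.of_forall fun ξ => ?_)
    · filter_upwards [hlarge (2 * r)] with z hz using hbound z hz
    · simpa using (tendsto_one_sub_div_cobounded ξ).norm.log (by simp)
  refine hkey.congr' ?_
  filter_upwards [hlarge 0, hlarge (2 * r)] with z hz₀ hz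
  have hlog : ∀ᵐ ξ ∂ρ, Real.log ‖z - ξ‖ = Real.log ‖1 - ξ / z‖ + Real.log ‖z‖ := by
    filter_upwards [hρ] with ξ hξ
    rw [← Real.log_mul (by linarith [(norm_one_sub_div_mem_Icc hz hξ).1]) hz₀.ne', ← norm_mul,
      sub_mul, one_mul, div_mul_cancel₀ _ (norm_pos_iff.1 hz₀)]
  rw [logPotential, integral_congr_ae hlog, integral_add (hint z hz) (integrable_const _)]
  simp

lemma measureReal_univ_eq_of_sq_cauchyTransform_ae_eq {μ ν : Measure ℂ} [IsFiniteMeasure μ]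
    [IsFiniteMeasure ν] (hμ : ∀ᵐ ξ ∂μ, ‖ξ‖ ≤ r) (hν : ∀ᵐ ξ ∂ν, ‖ξ‖ ≤ r)
    (hsq : ∀ᵐ z, cauchyTransform μ z ^ 2 = cauchyTransform ν z ^ 2) :
    μ.real univ = ν.real univ := by
  have : (cobounded ℂ ⊓ ae volume).NeBot := neBot_cobounded_inf_ae (by simp)
  have hlim := ((tendsto_mul_cauchyTransform_cobounded hμ).pow 2).mono_left
    (inf_le_left (b := ae volume))
  have hlim' := ((tendsto_mul_cauchyTransform_cobounded hν).pow 2).mono_left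
    (inf_le_left (b := ae volume))
  have heq := tendsto_nhds_unique_of_eventuallyEq hlim hlim' (by
    filter_upwards [hsq.filter_mono inf_le_right] with z hz
    rw [mul_pow, mul_pow, hz])
  exact (sq_eq_sq₀ measureReal_nonneg measureReal_nonneg).1 (by exact_mod_cast heq)

lemma tendsto_logPotential_sub_logPotential_cobounded {μ ν : Measure ℂ} [IsFiniteMeasure μ]
    [IsFiniteMeasure ν] (hμ : ∀ᵐ ξ ∂μ, ‖ξ‖ ≤ r) (hν : ∀ᵐ ξ ∂ν, ‖ξ‖ ≤ r)
    (hmass : μ.real univ = ν.real univ) :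
    Tendsto (fun z => logPotential μ z - logPotential ν z) (cobounded ℂ) (𝓝 0) := by
  simpa [hmass] using (tendsto_logPotential_sub_log_cobounded hμ).sub
    (tendsto_logPotential_sub_log_cobounded hν)

end Asymptotics

lemma integrable_fderiv_apply {E F : Type*} [NormedAddCommGroup E] [NormedSpace ℝ E]
    [SecondCountableTopology E] [MeasurableSpace E] [OpensMeasurableSpace E]
    [NormedAddCommGroup F] [NormedSpace ℝ F] {m : Measure E} {ψ : E → F} (hψ : ContDiff ℝ 1 ψ)
    (hc : HasCompactSupport ψ) {V : E → E} (hV : LocallyIntegrable V m) :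
    Integrable (fun z => fderiv ℝ ψ z (V z)) m := by
  have hdψ := hψ.continuous_fderiv one_ne_zero
  obtain ⟨D, hD⟩ := hdψ.bounded_above_of_compact_support (hc.fderiv ℝ)
  rw [← integrableOn_iff_integrable_of_support_subset (s := tsupport ψ) fun z hz => ?_]
  · refine ((hV.integrableOn_isCompact hc).norm.const_mul D).mono'
      (isBoundedBilinearMap_apply.continuous.comp_aestronglyMeasurable₂
        hdψ.aestronglyMeasurable hV.aestronglyMeasurable).restrict (.of_forall fun z => ?_)
    exact (ContinuousLinearMap.le_opNorm _ _).trans (by gcongr; exact hD z)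
  · by_contra hz'
    simp [fderiv_eq_zero_of_notMem_tsupport hz'] at hz

lemma tendsto_integral_fderiv_radialBump_nhdsGT {E : Type*} [NormedAddCommGroup E]
    [InnerProductSpace ℝ E] [ProperSpace E] [MeasurableSpace E] [OpensMeasurableSpace E]
    {m : Measure E} {V : E → E}
    (hV : LocallyIntegrable V m) {a : E}
    (h : Tendsto (fun ε => ε⁻¹ * ∫ z in ball a ε, ‖V z‖ ∂m) (𝓝[>] 0) (𝓝 0)) :
    Tendsto (fun ε => ∫ z, fderiv ℝ (radialBump a ε) z (V z) ∂m) (𝓝[>] 0) (𝓝 0) := by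
  obtain ⟨D, hD⟩ := exists_norm_fderiv_radialBump_le (E := E)
  refine squeeze_zero_norm' ?_ (by simpa using h.const_mul D)
  filter_upwards [self_mem_nhdsWithin] with ε hε
  have hint : IntegrableOn V (ball a ε) m :=
    (hV.integrableOn_isCompact (isCompact_closedBall a ε)).mono_set ball_subset_closedBall
  calc ‖∫ z, fderiv ℝ (radialBump a ε) z (V z) ∂m‖
      ≤ ∫ z in ball a ε, ε⁻¹ * D * ‖V z‖ ∂m := by
        rw [← setIntegral_ball_fderiv_radialBump_apply m V a hε]
        refine norm_integral_le_of_norm_le (hint.norm.const_mul _) (.of_forall fun z => ?_)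
        exact (ContinuousLinearMap.le_opNorm _ _).trans (by gcongr; exact hD a ε hε z)
    _ = D * (ε⁻¹ * ∫ z in ball a ε, ‖V z‖ ∂m) := by rw [integral_const_mul]; ring

lemma norm_integral_fderiv_radialBump_zero_le {D : ℝ}
    (hD : ∀ ε : ℝ, 0 < ε → ∀ z, ‖fderiv ℝ (radialBump (0 : ℂ) ε) z‖ ≤ ε⁻¹ * D) {V : ℂ → ℂ}
    {δ R : ℝ} (hδ : 0 ≤ δ) (hR : 0 < R) (hV : ∀ z, R / 2 ≤ ‖z‖ → ‖V z‖ ≤ δ * ‖z⁻¹‖) :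
    ‖∫ z, fderiv ℝ (radialBump 0 R) z (V z)‖ ≤ 2 * Real.pi * D * δ := by
  have hD₀ : 0 ≤ D := by simpa using (norm_nonneg _).trans (hD 1 one_pos 0)
  have hbound : ∀ z : ℂ, ‖fderiv ℝ (radialBump 0 R) z (V z)‖ ≤ R⁻¹ * D * (δ * (2 / R)) :=
    fun z => by
    rcases le_or_gt ‖z‖ (R / 2) with hz | hz
    · rw [fderiv_radialBump_eq_zero_of_norm_le hR (by simpa using hz), zero_apply, norm_zero]
      positivity
    · refine (ContinuousLinearMap.le_opNorm _ _).trans ?_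
      have hinv : ‖z⁻¹‖ ≤ 2 / R := by
        rw [norm_inv, ← inv_div]
        exact inv_anti₀ (by positivity) hz.le
      have hVz : ‖V z‖ ≤ δ * (2 / R) := (hV z hz.le).trans (by gcongr)
      gcongr
      exact hD R hR z
  calc ‖∫ z, fderiv ℝ (radialBump 0 R) z (V z)‖
      ≤ R⁻¹ * D * (δ * (2 / R)) * volume.real (ball (0 : ℂ) R) := by
        rw [← setIntegral_ball_fderiv_radialBump_apply volume V 0 hR]
        exact norm_setIntegral_le_of_norm_le_const measure_ball_lt_top fun z _ => hbound z
    _ = 2 * Real.pi * D * δ := by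
        rw [measureReal_def, Complex.volume_ball]
        simp [hR.le]
        field_simp

lemma tendsto_integral_fderiv_radialBump_atTop {V : ℂ → ℂ}
    (hV : V =o[Bornology.cobounded ℂ] fun z => z⁻¹) :
    Tendsto (fun R => ∫ z, fderiv ℝ (radialBump 0 R) z (V z)) atTop (𝓝 0) := by
  obtain ⟨D, hD⟩ := exists_norm_fderiv_radialBump_le (E := ℂ)
  refine (Asymptotics.isLittleO_one_iff ℝ).1 (.trans_isBigO (g := fun _ => 2 * Real.pi * D)
    (Asymptotics.isLittleO_iff.2 fun δ hδ => ?_) (Asymptotics.isBigO_const_const _ one_ne_zero _))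
  have hlarge := hV.bound hδ
  rw [← comap_norm_atTop, eventually_comap] at hlarge
  obtain ⟨R₀, hR₀⟩ := eventually_atTop.1 hlarge
  filter_upwards [eventually_gt_atTop 0, eventually_ge_atTop (2 * R₀)] with R hR hRR₀
  refine (norm_integral_fderiv_radialBump_zero_le (hD 0) hδ.le hR fun z hz =>
    hR₀ ‖z‖ (by linarith) z rfl).trans ?_
  rw [mul_comm]
  gcongr
  exact le_abs_self _

lemma locallyIntegrable_smul_of_bounded {E F : Type*} [TopologicalSpace E] [MeasurableSpace E]
    [NormedAddCommGroup F] [NormedSpace ℝ F] {m : Measure E} {V : E → F} {h : E → ℝ} {A : ℝ}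
    (hV : LocallyIntegrable V m) (hh : AEStronglyMeasurable h m) (hA : ∀ z, |h z| ≤ A) :
    LocallyIntegrable (fun z => h z • V z) m := fun z =>
  let ⟨s, hs, hVs⟩ := hV z
  ⟨s, hs, hVs.bdd_smul A hh.restrict (.of_forall hA)⟩

lemma tendsto_inv_mul_setIntegral_ball_norm_smul {E F : Type*} [PseudoMetricSpace E] [ProperSpace E]
    [MeasurableSpace E] [NormedAddCommGroup F] [NormedSpace ℝ F] {m : Measure E} {V : E → F}
    {h : E → ℝ} {A : ℝ} (hV : LocallyIntegrable V m) (hA : ∀ z, |h z| ≤ A) {a : E}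
    (hlim : Tendsto (fun ε => ε⁻¹ * ∫ z in ball a ε, ‖V z‖ ∂m) (𝓝[>] 0) (𝓝 0)) :
    Tendsto (fun ε => ε⁻¹ * ∫ z in ball a ε, ‖h z • V z‖ ∂m) (𝓝[>] 0) (𝓝 0) := by
  refine squeeze_zero' ?_ ?_ (by simpa using hlim.const_mul A)
  · filter_upwards [self_mem_nhdsWithin] with ε hε
    have : 0 < ε := hε
    positivity
  · filter_upwards [self_mem_nhdsWithin] with ε hε
    have hε : 0 < ε := hε
    have hint : IntegrableOn V (ball a ε) m :=
      (hV.integrableOn_isCompact (isCompact_closedBall a ε)).mono_set ball_subset_closedBall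
    rw [mul_left_comm, ← integral_const_mul A]
    refine mul_le_mul_of_nonneg_left ?_ (inv_nonneg.2 hε.le)
    refine integral_mono_of_nonneg (.of_forall fun z => norm_nonneg (h z • V z))
      (hint.norm.const_mul A) (.of_forall fun z => ?_)
    simp only [norm_smul]
    gcongr
    exact hA z

section CauchyTransform

variable {ρ : Measure ℂ} [IsFiniteMeasure ρ] {h : ℂ → ℝ} {A c : ℝ}

lemma locallyIntegrable_conj_cauchyTransform (ρ : Measure ℂ) [IsFiniteMeasure ρ] :
    LocallyIntegrable fun z => conj (cauchyTransform ρ z) :=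
  (locallyIntegrable_cauchyTransform ρ).mono (Complex.continuous_conj.comp_aestronglyMeasurable
    (aestronglyMeasurable_cauchyTransform ρ))
    (.of_forall fun z => (RCLike.norm_conj (cauchyTransform ρ z)).le)

lemma cauchyTransform_dirac (a z : ℂ) : cauchyTransform (Measure.dirac a) z = (z - a)⁻¹ :=
  integral_dirac _ a

lemma locallyIntegrable_conj_inv_sub (a : ℂ) : LocallyIntegrable fun z => conj (z - a)⁻¹ := by
  simpa only [cauchyTransform_dirac] using
    locallyIntegrable_conj_cauchyTransform (Measure.dirac a)

lemma integral_fderiv_radialBump_smul_conj_inv_sub_le (hh : AEStronglyMeasurable h volume)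
    (hA : ∀ z, |h z| ≤ A) (hc : ∀ z, -c ≤ h z) (a : ℂ) {ε : ℝ} (hε : 0 < ε) :
    ∫ z, fderiv ℝ (radialBump a ε) z (h z • conj (z - a)⁻¹) ≤ 2 * Real.pi * c := by
  have hker := locallyIntegrable_conj_inv_sub a
  have hbump := contDiff_radialBump a ε
  have hsupp := hasCompactSupport_radialBump a hε
  calc ∫ z, fderiv ℝ (radialBump a ε) z (h z • conj (z - a)⁻¹)
      ≤ ∫ z, -c * fderiv ℝ (radialBump a ε) z (conj (z - a)⁻¹) := by
        refine integral_mono (integrable_fderiv_apply hbump hsupp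
          (locallyIntegrable_smul_of_bounded hker hh hA))
          ((integrable_fderiv_apply hbump hsupp hker).const_mul _) fun z => ?_
        simp only [map_smul, smul_eq_mul]
        exact mul_le_mul_of_nonpos_right (hc z) (fderiv_radialBump_conj_inv_sub_nonpos a ε z)
    _ = 2 * Real.pi * c := by
        rw [integral_const_mul, integral_fderiv_conj_inv_sub hbump hsupp a,
          radialBump_eq_one hε (by simpa using by positivity)]
        simp only [smul_eq_mul]
        ring

lemma exists_integral_fderiv_radialBump_smul_conj_cauchyTransform_le
    (hh : AEStronglyMeasurable h volume) (hA : ∀ z, |h z| ≤ A) (hc : ∀ z, -c ≤ h z) (a : ℂ) :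
    ∃ r : ℝ → ℝ, Tendsto r (𝓝[>] 0) (𝓝 0) ∧ ∀ ε > 0,
      ∫ z, fderiv ℝ (radialBump a ε) z (h z • conj (cauchyTransform ρ z)) ≤
        2 * Real.pi * c * ρ.real {a} + r ε := by
  set σ := ρ.restrict {a}ᶜ
  have hσ : LocallyIntegrable fun z => h z • conj (cauchyTransform σ z) :=
    locallyIntegrable_smul_of_bounded (locallyIntegrable_conj_cauchyTransform σ) hh hA
  have hσlim : Tendsto (fun ε => ε⁻¹ * ∫ z in ball a ε, ‖conj (cauchyTransform σ z)‖) (𝓝[>] 0)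
      (𝓝 0) := by
    simpa using tendsto_inv_mul_setIntegral_ball_norm_cauchyTransform (μ := σ) (a := a)
      (by simp [σ])
  refine ⟨_, tendsto_integral_fderiv_radialBump_nhdsGT hσ
    (tendsto_inv_mul_setIntegral_ball_norm_smul (locallyIntegrable_conj_cauchyTransform σ) hA
      hσlim), fun ε hε => ?_⟩
  have hker := locallyIntegrable_conj_inv_sub a
  have hbump := contDiff_radialBump a ε
  have hsupp := hasCompactSupport_radialBump a hε
  calc ∫ z, fderiv ℝ (radialBump a ε) z (h z • conj (cauchyTransform ρ z))
      = ∫ z, (ρ.real {a} * fderiv ℝ (radialBump a ε) z (h z • conj (z - a)⁻¹) +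
          fderiv ℝ (radialBump a ε) z (h z • conj (cauchyTransform σ z))) := by
        refine integral_congr_ae ?_
        filter_upwards [ae_integrable_inv_sub ρ] with z hz
        rw [cauchyTransform_eq_add_restrict_compl_singleton a hz, map_add, smul_add, map_add,
          map_mul, Complex.conj_ofReal, ← Complex.real_smul, smul_comm, map_smul, smul_eq_mul]
    _ = ρ.real {a} * (∫ z, fderiv ℝ (radialBump a ε) z (h z • conj (z - a)⁻¹)) +
          ∫ z, fderiv ℝ (radialBump a ε) z (h z • conj (cauchyTransform σ z)) := by
        rw [integral_add ((integrable_fderiv_apply hbump hsupp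
          (locallyIntegrable_smul_of_bounded hker hh hA)).const_mul _)
          (integrable_fderiv_apply hbump hsupp hσ), integral_const_mul]
    _ ≤ _ := by
        rw [mul_comm (2 * Real.pi * c)]
        gcongr
        exact integral_fderiv_radialBump_smul_conj_inv_sub_le hh hA hc a hε

lemma tendsto_integral_fderiv_radialBump_smul_conj_cauchyTransform {r : ℝ}
    (hρ : ∀ᵐ ξ ∂ρ, ‖ξ‖ ≤ r) (hh : Tendsto h (Bornology.cobounded ℂ) (𝓝 0)) :
    Tendsto (fun R => ∫ z, fderiv ℝ (radialBump 0 R) z (h z • conj (cauchyTransform ρ z))) atTop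
      (𝓝 0) := by
  refine tendsto_integral_fderiv_radialBump_atTop ?_
  have hconj : (fun z => conj (cauchyTransform ρ z)) =O[Bornology.cobounded ℂ] fun z => z⁻¹ :=
    (Asymptotics.isBigO_of_le _ fun z => (RCLike.norm_conj _).le).trans
      (cauchyTransform_isBigO_cobounded hρ)
  simpa using ((Asymptotics.isLittleO_one_iff ℝ).2 hh).smul_isBigO hconj

end CauchyTransform

section Cutoff

variable {E : Type*} [NormedAddCommGroup E]

/-- The `ε`-balls around the points of `Z` are disjoint and lie where the outer bump of
`cutoff Z ε` is `1`. -/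
structure IsSeparatingRadius (Z : Finset E) (ε : ℝ) : Prop where
  pos : 0 < ε
  two_mul_le_norm_sub : ∀ a ∈ Z, ∀ b ∈ Z, a ≠ b → 2 * ε ≤ ‖a - b‖
  norm_add_le : ∀ a ∈ Z, ‖a‖ + ε ≤ ε⁻¹ / 2

variable {Z : Finset E} {ε : ℝ}

lemma eventually_isSeparatingRadius (Z : Finset E) :
    ∀ᶠ ε : ℝ in 𝓝[>] 0, IsSeparatingRadius Z ε := by
  have hsep : ∀ᶠ ε : ℝ in 𝓝[>] 0, ∀ a ∈ Z, ∀ b ∈ Z, a ≠ b → 2 * ε ≤ ‖a - b‖ := by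
    refine (eventually_all_finset Z).2 fun a _ => (eventually_all_finset Z).2 fun b _ => ?_
    by_cases hab : a = b
    · simp [hab]
    · have hpos : 0 < ‖a - b‖ / 2 := half_pos (norm_pos_iff.2 (sub_ne_zero.2 hab))
      filter_upwards [Ioo_mem_nhdsGT hpos] with ε hε _
      linarith [hε.2]
  have hin : ∀ᶠ ε : ℝ in 𝓝[>] 0, ∀ a ∈ Z, ‖a‖ + ε ≤ ε⁻¹ / 2 := by
    refine (eventually_all_finset Z).2 fun a _ => ?_
    filter_upwards [tendsto_inv_nhdsGT_zero.eventually_ge_atTop (2 * (‖a‖ + 1)),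
      Ioo_mem_nhdsGT (zero_lt_one' ℝ)] with ε hlarge hsmall
    linarith [hsmall.2]
  filter_upwards [self_mem_nhdsWithin, hsep, hin] with ε h₀ h₁ h₂ using ⟨h₀, h₁, h₂⟩

variable [InnerProductSpace ℝ E]

/-- A cutoff function which, for `ε` small, vanishes near the finite set `Z` and outside the
`ε⁻¹`-ball around `0`, and which tends to `1` off `Z` as `ε → 0`. -/
noncomputable def cutoff (Z : Finset E) (ε : ℝ) (z : E) : ℝ :=
  radialBump 0 ε⁻¹ z - ∑ a ∈ Z, radialBump a ε z

lemma contDiff_cutoff (Z : Finset E) (ε : ℝ) : ContDiff ℝ 1 (cutoff Z ε) :=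
  (contDiff_radialBump 0 ε⁻¹).sub (ContDiff.sum fun a _ => contDiff_radialBump a ε)

lemma fderiv_cutoff_apply (Z : Finset E) (ε : ℝ) (z v : E) : fderiv ℝ (cutoff Z ε) z v =
    fderiv ℝ (radialBump 0 ε⁻¹) z v - ∑ a ∈ Z, fderiv ℝ (radialBump a ε) z v := by
  have hbump : ∀ (a : E) ε, HasFDerivAt (radialBump a ε) (fderiv ℝ (radialBump a ε) z) z :=
    fun a ε => ((contDiff_radialBump a ε).differentiable one_ne_zero z).hasFDerivAt
  have hcutoff : HasFDerivAt (cutoff Z ε) _ z :=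
    (hbump 0 ε⁻¹).sub (HasFDerivAt.fun_sum fun a _ => hbump a ε)
  rw [hcutoff.fderiv]
  simp

lemma cutoff_le_one (Z : Finset E) (ε : ℝ) (z : E) : cutoff Z ε z ≤ 1 :=
  (sub_le_self _ (Finset.sum_nonneg fun a _ => radialBump_nonneg a ε z)).trans
    (radialBump_le_one _ _ _)

lemma eventually_cutoff_eq_one {z : E} (hz : z ∉ Z) : ∀ᶠ ε : ℝ in 𝓝[>] 0, cutoff Z ε z = 1 := by
  have hfar : ∀ᶠ ε : ℝ in 𝓝[>] 0, ∀ a ∈ Z, ε ≤ ‖z - a‖ :=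
    (eventually_all_finset Z).2 fun a ha => by
      have hpos : 0 < ‖z - a‖ := norm_pos_iff.2 (sub_ne_zero.2 fun h => hz (h ▸ ha))
      filter_upwards [Ioo_mem_nhdsGT hpos] with ε hε using hε.2.le
  filter_upwards [hfar, tendsto_inv_nhdsGT_zero.eventually_ge_atTop (2 * ‖z‖),
    self_mem_nhdsWithin] with ε hεZ hεz hε
  rw [mem_Ioi] at hε
  rw [cutoff, radialBump_eq_one (inv_pos.2 hε) (by rw [sub_zero]; linarith),
    Finset.sum_eq_zero fun a ha => radialBump_eq_zero hε (hεZ a ha), sub_zero]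

namespace IsSeparatingRadius

lemma hasCompactSupport_cutoff [ProperSpace E] (h : IsSeparatingRadius Z ε) :
    HasCompactSupport (cutoff Z ε) := by
  refine .of_support_subset_isCompact (isCompact_closedBall 0 ε⁻¹) fun z hz => ?_
  contrapose! hz
  rw [mem_closedBall_zero_iff, not_le] at hz
  rw [Function.notMem_support, cutoff,
    radialBump_eq_zero (inv_pos.2 h.pos) (by rw [sub_zero]; exact hz.le),
    Finset.sum_eq_zero, sub_zero]
  intro a ha
  have hε := inv_pos.2 h.pos
  exact radialBump_eq_zero h.pos (by linarith [h.norm_add_le a ha, norm_sub_norm_le z a])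

lemma cutoff_of_mem_ball (h : IsSeparatingRadius Z ε) {a z : E} (ha : a ∈ Z)
    (hz : z ∈ ball a ε) : cutoff Z ε z = 1 - radialBump a ε z := by
  rw [mem_ball_iff_norm] at hz
  have hnorm : ‖z‖ ≤ ε⁻¹ / 2 := by linarith [norm_sub_norm_le z a, h.norm_add_le a ha]
  rw [cutoff, radialBump_eq_one (inv_pos.2 h.pos) (by rwa [sub_zero]),
    Finset.sum_eq_single_of_mem a ha]
  intro b hb hba
  have htri : ‖a - b‖ ≤ ‖a - z‖ + ‖z - b‖ := norm_sub_le_norm_sub_add_norm_sub _ _ _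
  rw [norm_sub_rev a z] at htri
  exact radialBump_eq_zero h.pos (by linarith [h.two_mul_le_norm_sub a ha b hb hba.symm])

lemma cutoff_nonneg (h : IsSeparatingRadius Z ε) (z : E) : 0 ≤ cutoff Z ε z := by
  by_cases hz : ∃ a ∈ Z, z ∈ ball a ε
  · obtain ⟨a, ha, hza⟩ := hz
    rw [h.cutoff_of_mem_ball ha hza, sub_nonneg]
    exact radialBump_le_one _ _ _
  · push Not at hz
    rw [cutoff, Finset.sum_eq_zero, sub_zero]
    · exact radialBump_nonneg _ _ _
    · exact fun a ha => radialBump_eq_zero h.pos (by simpa [dist_eq_norm] using hz a ha)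

lemma disjoint_tsupport_cutoff (h : IsSeparatingRadius Z ε) :
    Disjoint (tsupport (cutoff Z ε)) Z := by
  rw [Set.disjoint_right]
  intro a ha
  rw [notMem_tsupport_iff_eventuallyEq]
  filter_upwards [ball_mem_nhds a (half_pos h.pos)] with z hz
  rw [h.cutoff_of_mem_ball (Finset.mem_coe.1 ha) (ball_subset_ball (by linarith [h.pos]) hz),
    radialBump_eq_one h.pos (mem_ball_iff_norm.1 hz).le]
  simp

end IsSeparatingRadius

end Cutoff

section Localization

/-- The function `f` is `m`-essentially bounded on every compact set which does not meet `Z`. -/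
def IsLocallyEssBoundedOff {X F : Type*} [TopologicalSpace X] [MeasurableSpace X] [Norm F]
    (m : Measure X) (f : X → F) (Z : Set X) : Prop :=
  ∀ S, IsCompact S → Disjoint S Z → ∃ B, ∀ᵐ x ∂m, x ∈ S → ‖f x‖ ≤ B

variable {ρ : Measure ℂ} [IsFiniteMeasure ρ]

lemma exists_neg_integral_fderiv_cutoff_le {h : ℂ → ℝ} {r A c : ℝ} (hρ : ∀ᵐ ξ ∂ρ, ‖ξ‖ ≤ r)
    (hh : AEStronglyMeasurable h volume) (hA : ∀ z, |h z| ≤ A) (hc : ∀ z, -c ≤ h z)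
    (hlim : Tendsto h (Bornology.cobounded ℂ) (𝓝 0)) (Z : Finset ℂ) :
    ∃ e : ℝ → ℝ, Tendsto e (𝓝[>] 0) (𝓝 0) ∧ ∀ ε > 0,
      -∫ z, fderiv ℝ (cutoff Z ε) z (h z • conj (cauchyTransform ρ z)) ≤
        2 * Real.pi * c * ∑ a ∈ Z, ρ.real {a} + e ε := by
  choose e he hle using
    exists_integral_fderiv_radialBump_smul_conj_cauchyTransform_le (ρ := ρ) hh hA hc
  have hinf := (tendsto_integral_fderiv_radialBump_smul_conj_cauchyTransform hρ hlim).comp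
    (tendsto_inv_nhdsGT_zero (𝕜 := ℝ))
  refine ⟨_, by simpa using (tendsto_finsetSum Z fun a _ => he a).sub hinf, fun ε hε => ?_⟩
  have hint : ∀ (a : ℂ) (ε : ℝ), 0 < ε → Integrable fun z =>
      fderiv ℝ (radialBump a ε) z (h z • conj (cauchyTransform ρ z)) := fun a ε hε =>
    integrable_fderiv_apply (contDiff_radialBump a ε) (hasCompactSupport_radialBump a hε)
      (locallyIntegrable_smul_of_bounded (locallyIntegrable_conj_cauchyTransform ρ) hh hA)
  simp_rw [fderiv_cutoff_apply]
  rw [integral_sub (hint 0 _ (inv_pos.2 hε)) (integrable_finsetSum _ fun a _ => hint a ε hε),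
    integral_finsetSum _ fun a _ => hint a ε hε, neg_sub, Finset.mul_sum, ← add_sub_assoc,
    ← Finset.sum_add_distrib]
  exact sub_le_sub_right (Finset.sum_le_sum fun a _ => hle a ε hε) _

namespace IsC1Approx

variable {w : ℕ → ℂ → ℝ} {u : ℂ → ℝ} {L : ℂ → ℂ →L[ℝ] ℝ} {Φ : ℝ → ℝ} {A A' c : ℝ}

lemma integral_mul_deriv_comp_le (happrox : IsC1Approx volume w u L) (hΦ : ContDiff ℝ 1 Φ)
    (hA : ∀ t, |Φ t| ≤ A) (hA' : ∀ t, |deriv Φ t| ≤ A') (hc₀ : 0 ≤ c) (hc : ∀ t, -c ≤ Φ t)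
    {χ : ℂ → ℝ} (hχ : ContDiff ℝ 1 χ) (hsupp : HasCompactSupport χ) (hχ₀ : ∀ z, 0 ≤ χ z)
    (hχ₁ : ∀ z, χ z ≤ 1) {B : ℝ} (hB : ∀ᵐ z, z ∈ tsupport χ → ‖cauchyTransform ρ z‖ ≤ B) :
    Integrable (fun z => χ z * (deriv Φ (u z) * L z (conj (cauchyTransform ρ z)))) ∧
    ∫ z, χ z * (deriv Φ (u z) * L z (conj (cauchyTransform ρ z))) ≤
      2 * Real.pi * c * ρ.real univ -
        ∫ z, fderiv ℝ χ z (Φ (u z) • conj (cauchyTransform ρ z)) := by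
  have hV := locallyIntegrable_conj_cauchyTransform ρ
  have hcomp := happrox.mul_comp hχ hsupp hΦ hA hA'
  have hcompSupp : ∀ n, tsupport (fun z => χ z * Φ (w n z)) ⊆ tsupport χ := fun n =>
    tsupport_mul_subset_left
  have hint := hcomp.integrable_apply hsupp hcompSupp hV.aestronglyMeasurable (by simpa using hB)
  have hbdry : Integrable fun z => fderiv ℝ χ z (Φ (u z) • conj (cauchyTransform ρ z)) :=
    integrable_fderiv_apply hχ hsupp (locallyIntegrable_smul_of_bounded hV
      (hΦ.continuous.comp_aestronglyMeasurable happrox.aestronglyMeasurable) fun z => hA _)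
  have hlow : ∀ n z, -c ≤ χ z * Φ (w n z) := fun n z => by
    nlinarith [hc (w n z), hχ₀ z, hχ₁ z]
  have hle := hcomp.integral_apply_conj_cauchyTransform_le hsupp hcompSupp hB hlow
  have hsplit : ∀ z, χ z * (deriv Φ (u z) * L z (conj (cauchyTransform ρ z))) =
      ((χ z * deriv Φ (u z)) • L z + Φ (u z) • fderiv ℝ χ z) (conj (cauchyTransform ρ z)) -
        fderiv ℝ χ z (Φ (u z) • conj (cauchyTransform ρ z)) := fun z => by
    rw [add_apply, smul_apply, smul_apply, map_smul,
      add_sub_cancel_right, smul_eq_mul, mul_assoc]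
  simp_rw [hsplit]
  exact ⟨hint.sub hbdry, by rw [integral_sub hint hbdry]; exact sub_le_sub_right hle _⟩

lemma exists_integral_cutoff_mul_deriv_comp_le (happrox : IsC1Approx volume w u L)
    (hu : Tendsto u (Bornology.cobounded ℂ) (𝓝 0)) (hΦ : ContDiff ℝ 1 Φ) (hΦ₀ : Φ 0 = 0)
    (hA : ∀ t, |Φ t| ≤ A) (hA' : ∀ t, |deriv Φ t| ≤ A') (hc : ∀ t, -c ≤ Φ t) {r : ℝ}
    (hρ : ∀ᵐ ξ ∂ρ, ‖ξ‖ ≤ r) {Z : Finset ℂ}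
    (hloc : IsLocallyEssBoundedOff volume (cauchyTransform ρ) Z) :
    ∃ e : ℝ → ℝ, Tendsto e (𝓝[>] 0) (𝓝 0) ∧ ∀ᶠ ε in 𝓝[>] 0,
      Integrable (fun z => cutoff Z ε z * (deriv Φ (u z) * L z (conj (cauchyTransform ρ z)))) ∧
      ∫ z, cutoff Z ε z * (deriv Φ (u z) * L z (conj (cauchyTransform ρ z))) ≤
        2 * Real.pi * c * (ρ.real univ + ∑ a ∈ Z, ρ.real {a}) + e ε := by
  have hlim : Tendsto (fun z => Φ (u z)) (Bornology.cobounded ℂ) (𝓝 0) := by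
    simpa only [hΦ₀, Function.comp_def] using (hΦ.continuous.tendsto 0).comp hu
  obtain ⟨e, he, hbdry⟩ := exists_neg_integral_fderiv_cutoff_le hρ
    (hΦ.continuous.comp_aestronglyMeasurable happrox.aestronglyMeasurable) (fun z => hA _)
    (fun z => hc _) hlim Z
  refine ⟨e, he, ?_⟩
  filter_upwards [eventually_isSeparatingRadius Z] with ε hε
  have hsupp := hε.hasCompactSupport_cutoff
  obtain ⟨B, hB⟩ := hloc _ hsupp hε.disjoint_tsupport_cutoff
  obtain ⟨hint, hle⟩ := happrox.integral_mul_deriv_comp_le hΦ hA hA'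
    (by simpa only [hΦ₀, Left.neg_nonpos_iff] using hc 0) hc (contDiff_cutoff Z ε) hsupp
    hε.cutoff_nonneg (cutoff_le_one Z ε) hB
  exact ⟨hint, by linarith [hbdry ε hε.pos]⟩

end IsC1Approx

end Localization

section Truncation

/-- A bounded function with derivative `s` at `0` whose minimum tends to `0` as `M → ∞`. -/
noncomputable def truncation (M s t : ℝ) : ℝ := M * Real.arctan t ^ 2 + s * Real.arctan t

variable (M s t : ℝ)

@[simp] lemma truncation_zero : truncation M s 0 = 0 := by simp [truncation]

lemma contDiff_truncation : ContDiff ℝ 1 (truncation M s) :=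
  (contDiff_const.mul (Real.contDiff_arctan.pow 2)).add (contDiff_const.mul Real.contDiff_arctan)

lemma deriv_truncation :
    deriv (truncation M s) t = (2 * M * Real.arctan t + s) * (1 + t ^ 2)⁻¹ := by
  have h : HasDerivAt (truncation M s) _ t := (((Real.hasDerivAt_arctan t).pow 2).const_mul M).add
    ((Real.hasDerivAt_arctan t).const_mul s)
  rw [h.deriv]
  simp
  ring

lemma abs_arctan_le_pi_div_two : |Real.arctan t| ≤ Real.pi / 2 :=
  abs_le.2 ⟨(Real.neg_pi_div_two_lt_arctan t).le, (Real.arctan_lt_pi_div_two t).le⟩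

lemma abs_truncation_le :
    |truncation M s t| ≤ |M| * (Real.pi / 2) ^ 2 + |s| * (Real.pi / 2) := by
  refine (abs_add_le _ _).trans ?_
  rw [abs_mul, abs_mul, abs_pow]
  gcongr <;> exact abs_arctan_le_pi_div_two t

lemma abs_deriv_truncation_le : |deriv (truncation M s) t| ≤ 2 * |M| * (Real.pi / 2) + |s| := by
  have hinv : (1 + t ^ 2)⁻¹ ≤ 1 := inv_le_one_of_one_le₀ (by nlinarith)
  calc |deriv (truncation M s) t|
      = |2 * M * Real.arctan t + s| * (1 + t ^ 2)⁻¹ := by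
        rw [deriv_truncation, abs_mul, abs_of_pos (by positivity : 0 < (1 + t ^ 2)⁻¹)]
    _ ≤ |2 * M * Real.arctan t + s| := mul_le_of_le_one_right (abs_nonneg _) hinv
    _ ≤ 2 * |M| * |Real.arctan t| + |s| := by
        simpa only [abs_mul, Nat.abs_ofNat] using abs_add_le (2 * M * Real.arctan t) s
    _ ≤ _ := by gcongr; exact abs_arctan_le_pi_div_two t

variable {M}

lemma neg_sq_div_le_truncation (hM : 0 < M) : -(s ^ 2 / (4 * M)) ≤ truncation M s t := by
  have hsq : truncation M s t + s ^ 2 / (4 * M) = (2 * M * Real.arctan t + s) ^ 2 / (4 * M) := by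
    rw [truncation]
    field_simp
    ring
  have hnonneg : 0 ≤ (2 * M * Real.arctan t + s) ^ 2 / (4 * M) := by positivity
  linarith

end Truncation

section Energy

lemma deriv_truncation_mul_inner_add {a b : ℂ} (h : a ^ 2 = b ^ 2) (M t : ℝ) :
    deriv (truncation M 1) t * inner ℝ (conj a - conj b) (conj a) +
      deriv (truncation M (-1)) t * inner ℝ (conj a - conj b) (conj b) =
    (1 + t ^ 2)⁻¹ * ‖a - b‖ ^ 2 := by
  have hsq : ‖a‖ ^ 2 = ‖b‖ ^ 2 := by rw [← norm_pow, h, norm_pow]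
  have hdiff : ‖a - b‖ ^ 2 = ‖a‖ ^ 2 - 2 * inner ℝ (conj a) (conj b) + ‖b‖ ^ 2 := by
    rw [← RCLike.norm_conj, map_sub, norm_sub_sq_real, RCLike.norm_conj, RCLike.norm_conj]
  rw [deriv_truncation, deriv_truncation, inner_sub_left, inner_sub_left,
    real_inner_self_eq_norm_sq, real_inner_self_eq_norm_sq, RCLike.norm_conj, RCLike.norm_conj,
    real_inner_comm (conj a) (conj b), hdiff, hsq]
  ring

lemma lintegral_ofReal_le_of_eventually_lintegral_cutoff_mul_le {E : Type*} [NormedAddCommGroup E]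
    [InnerProductSpace ℝ E] [MeasurableSpace E] [OpensMeasurableSpace E] {m : Measure E}
    [NullSingletonClass m] {g : E → ℝ} (hg : AEMeasurable g m) (Z : Finset E) {C : ℝ} {e : ℝ → ℝ}
    (he : Tendsto e (𝓝[>] 0) (𝓝 0)) (hle : ∀ᶠ ε : ℝ in 𝓝[>] 0,
      ∫⁻ z, ENNReal.ofReal (cutoff Z ε z * g z) ∂m ≤ ENNReal.ofReal (C + e ε)) :
    ∫⁻ z, ENNReal.ofReal (g z) ∂m ≤ ENNReal.ofReal C := by
  have hlim : Tendsto (fun ε => ENNReal.ofReal (C + e ε)) (𝓝[>] 0) (𝓝 (ENNReal.ofReal C)) :=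
    ENNReal.tendsto_ofReal (by simpa only [add_zero] using he.const_add C)
  calc ∫⁻ z, ENNReal.ofReal (g z) ∂m
      = ∫⁻ z, liminf (fun ε => ENNReal.ofReal (cutoff Z ε z * g z)) (𝓝[>] 0) ∂m := by
        refine lintegral_congr_ae ?_
        filter_upwards [Z.countable_toSet.ae_notMem m] with z hz
        refine (tendsto_const_nhds.congr' ?_).liminf_eq.symm
        filter_upwards [eventually_cutoff_eq_one hz] with ε hε
        rw [hε, one_mul]
    _ ≤ liminf (fun ε => ∫⁻ z, ENNReal.ofReal (cutoff Z ε z * g z) ∂m) (𝓝[>] 0) :=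
        lintegral_liminf_le' fun ε =>
          ((contDiff_cutoff Z ε).continuous.aemeasurable.mul hg).ennreal_ofReal
    _ ≤ liminf (fun ε => ENNReal.ofReal (C + e ε)) (𝓝[>] 0) := liminf_le_liminf hle
    _ = ENNReal.ofReal C := hlim.liminf_eq

/-- The weighted energy density of the difference of the logarithmic potentials of `μ` and `ν`. -/
noncomputable def energyDensity (μ ν : Measure ℂ) (z : ℂ) : ℝ :=
  (1 + (logPotential μ z - logPotential ν z) ^ 2)⁻¹ *
    ‖cauchyTransform μ z - cauchyTransform ν z‖ ^ 2

variable {μ ν : Measure ℂ}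

lemma energyDensity_nonneg (μ ν : Measure ℂ) (z : ℂ) : 0 ≤ energyDensity μ ν z := by
  unfold energyDensity
  positivity

lemma energyDensity_eq_zero_iff {z : ℂ} :
    energyDensity μ ν z = 0 ↔ cauchyTransform μ z = cauchyTransform ν z := by
  have hpos : (1 + (logPotential μ z - logPotential ν z) ^ 2)⁻¹ ≠ 0 := by positivity
  simp [energyDensity, hpos, sub_eq_zero]

variable [IsFiniteMeasure μ] [IsFiniteMeasure ν] {r : ℝ}

lemma isC1Approx_logPotential_sub (hμ : ∀ᵐ ξ ∂μ, ‖ξ‖ ≤ r) (hν : ∀ᵐ ξ ∂ν, ‖ξ‖ ≤ r) :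
    IsC1Approx volume (fun n => regLogPotential μ (1 / (n + 1)) - regLogPotential ν (1 / (n + 1)))
      (fun z => logPotential μ z - logPotential ν z)
      fun z => innerSL ℝ (conj (cauchyTransform μ z) - conj (cauchyTransform ν z)) := by
  simp only [map_sub (innerSL ℝ)]
  exact (isC1Approx_logPotential hμ).sub (isC1Approx_logPotential hν)

lemma aemeasurable_energyDensity (hμ : ∀ᵐ ξ ∂μ, ‖ξ‖ ≤ r) (hν : ∀ᵐ ξ ∂ν, ‖ξ‖ ≤ r) :
    AEMeasurable (energyDensity μ ν) :=
  (((isC1Approx_logPotential_sub hμ hν).aestronglyMeasurable.aemeasurable.pow_const 2).const_add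
    1).inv.mul (((aestronglyMeasurable_cauchyTransform μ).sub
      (aestronglyMeasurable_cauchyTransform ν)).norm.aemeasurable.pow_const 2)

lemma lintegral_energyDensity_le (hμ : ∀ᵐ ξ ∂μ, ‖ξ‖ ≤ r) (hν : ∀ᵐ ξ ∂ν, ‖ξ‖ ≤ r)
    (hsq : ∀ᵐ z, cauchyTransform μ z ^ 2 = cauchyTransform ν z ^ 2) {Z : Finset ℂ}
    (hlocμ : IsLocallyEssBoundedOff volume (cauchyTransform μ) Z)
    (hlocν : IsLocallyEssBoundedOff volume (cauchyTransform ν) Z)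
    {M : ℝ} (hM : 0 < M) :
    ∫⁻ z, ENNReal.ofReal (energyDensity μ ν z) ≤ ENNReal.ofReal (Real.pi / 2 *
      (μ.real univ + ∑ a ∈ Z, μ.real {a} + (ν.real univ + ∑ a ∈ Z, ν.real {a})) * M⁻¹) := by
  have happrox := isC1Approx_logPotential_sub hμ hν
  have hlim := tendsto_logPotential_sub_logPotential_cobounded hμ hν
    (measureReal_univ_eq_of_sq_cauchyTransform_ae_eq hμ hν hsq)
  obtain ⟨e, he, hle⟩ := happrox.exists_integral_cutoff_mul_deriv_comp_le hlim
    (contDiff_truncation M 1) (truncation_zero M 1) (abs_truncation_le M 1)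
    (abs_deriv_truncation_le M 1) (fun t => neg_sq_div_le_truncation 1 t hM) hμ hlocμ
  obtain ⟨e', he', hle'⟩ := happrox.exists_integral_cutoff_mul_deriv_comp_le hlim
    (contDiff_truncation M (-1)) (truncation_zero M (-1)) (abs_truncation_le M (-1))
    (abs_deriv_truncation_le M (-1)) (fun t => neg_sq_div_le_truncation (-1) t hM) hν hlocν
  refine lintegral_ofReal_le_of_eventually_lintegral_cutoff_mul_le
    (aemeasurable_energyDensity hμ hν) Z (e := fun ε => e ε + e' ε)
    (by simpa only [add_zero] using he.add he') ?_
  filter_upwards [hle, hle', eventually_isSeparatingRadius Z] with ε ⟨hint, hε⟩ ⟨hint', hε'⟩ hsep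
  let F (s : ℝ) (ρ : Measure ℂ) (z : ℂ) : ℝ :=
    cutoff Z ε z * (deriv (truncation M s) (logPotential μ z - logPotential ν z) *
      inner ℝ (conj (cauchyTransform μ z) - conj (cauchyTransform ν z))
        (conj (cauchyTransform ρ z)))
  have hsum : (fun z => cutoff Z ε z * energyDensity μ ν z) =ᵐ[volume] F 1 μ + F (-1) ν := by
    filter_upwards [hsq] with z hz
    rw [energyDensity, ← deriv_truncation_mul_inner_add hz M, mul_add, Pi.add_apply]
  rw [← ofReal_integral_eq_lintegral_ofReal ((hint.add hint').congr hsum.symm)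
    (.of_forall fun z => mul_nonneg (hsep.cutoff_nonneg z) (energyDensity_nonneg μ ν z)),
    integral_congr_ae hsum, integral_add' (f := F 1 μ) (g := F (-1) ν) hint hint']
  refine ENNReal.ofReal_le_ofReal ((add_le_add hε hε').trans_eq ?_)
  field_simp
  ring

lemma cauchyTransform_ae_eq_of_sq_ae_eq (hμ : ∀ᵐ ξ ∂μ, ‖ξ‖ ≤ r) (hν : ∀ᵐ ξ ∂ν, ‖ξ‖ ≤ r)
    (hsq : ∀ᵐ z, cauchyTransform μ z ^ 2 = cauchyTransform ν z ^ 2) {Z : Finset ℂ}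
    (hlocμ : IsLocallyEssBoundedOff volume (cauchyTransform μ) Z)
    (hlocν : IsLocallyEssBoundedOff volume (cauchyTransform ν) Z) :
    cauchyTransform μ =ᵐ[volume] cauchyTransform ν := by
  have hzero : ∫⁻ z, ENNReal.ofReal (energyDensity μ ν z) = 0 := by
    have hlim := ENNReal.tendsto_ofReal ((tendsto_inv_atTop_zero (𝕜 := ℝ)).const_mul (Real.pi / 2 *
      (μ.real univ + ∑ a ∈ Z, μ.real {a} + (ν.real univ + ∑ a ∈ Z, ν.real {a}))))
    rw [mul_zero, ENNReal.ofReal_zero] at hlim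
    refine le_antisymm (ge_of_tendsto hlim ?_) zero_le
    filter_upwards [eventually_gt_atTop 0] with M hM using
      lintegral_energyDensity_le hμ hν hsq hlocμ hlocν hM
  filter_upwards [(lintegral_eq_zero_iff' (aemeasurable_energyDensity hμ hν).ennreal_ofReal).1
    hzero] with z hz
  exact energyDensity_eq_zero_iff.1
    ((ENNReal.ofReal_eq_zero.1 hz).antisymm (energyDensity_nonneg μ ν z))

end Energy

section Uniqueness

lemma isLocallyEssBoundedOff_of_sq_ae_eq {X F : Type*} [TopologicalSpace X] [MeasurableSpace X]
    [NormedDivisionRing F] {m : Measure X} {f g : X → F} {Z : Set X} (hg : ContinuousOn g Zᶜ)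
    (hfg : ∀ᵐ x ∂m, f x ^ 2 = g x) : IsLocallyEssBoundedOff m f Z := by
  intro S hS hSZ
  obtain ⟨D, hD⟩ := hS.exists_bound_of_continuousOn (hg.mono hSZ.subset_compl_right)
  refine ⟨D + 1, ?_⟩
  filter_upwards [hfg] with x hx hxS
  have hsq : ‖f x‖ ^ 2 ≤ D := by simpa only [← norm_pow, hx] using hD x hxS
  nlinarith [sq_nonneg (‖f x‖ - 1)]

lemma exists_ae_norm_le_of_isCompact {E : Type*} [NormedAddCommGroup E] [MeasurableSpace E]
    {μ : Measure E} (h : ∃ K : Set E, IsCompact K ∧ μ Kᶜ = 0) : ∃ r : ℝ, ∀ᵐ ξ ∂μ, ‖ξ‖ ≤ r := by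
  obtain ⟨K, hK, hμK⟩ := h
  obtain ⟨r, hr⟩ := hK.isBounded.exists_norm_le
  exact ⟨r, Filter.Eventually.mono (mem_ae_iff.2 hμK) hr⟩

theorem stmt7_general {f : ℂ → ℂ} {Z : Set ℂ} (hZ : Z.Finite) (hf : ContinuousOn f Zᶜ)
    (μ ν : Measure ℂ) [IsFiniteMeasure μ] [IsFiniteMeasure ν]
    (hμK : ∃ K : Set ℂ, IsCompact K ∧ μ Kᶜ = 0) (hνK : ∃ K : Set ℂ, IsCompact K ∧ ν Kᶜ = 0)
    (hμ : ∀ᵐ z, cauchyTransform μ z ^ 2 = f z) (hν : ∀ᵐ z, cauchyTransform ν z ^ 2 = f z) :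
    μ = ν := by
  lift Z to Finset ℂ using hZ
  obtain ⟨r, hr⟩ := exists_ae_norm_le_of_isCompact hμK
  obtain ⟨r', hr'⟩ := exists_ae_norm_le_of_isCompact hνK
  have hsq : ∀ᵐ z, cauchyTransform μ z ^ 2 = cauchyTransform ν z ^ 2 := by
    filter_upwards [hμ, hν] with z hμz hνz using hμz.trans hνz.symm
  exact eq_of_cauchyTransform_ae_eq <| cauchyTransform_ae_eq_of_sq_ae_eq
    (hr.mono fun _ h => le_max_of_le_left h) (hr'.mono fun _ h => le_max_of_le_right h) hsq
    (isLocallyEssBoundedOff_of_sq_ae_eq hf hμ) (isLocallyEssBoundedOff_of_sq_ae_eq hf hν)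

end Uniqueness

/-- Theorem 5 (uniqueness part): for monic polynomials `U₁, U₂` with
`deg U₂ = deg U₁ + 2`, there is at most one compactly supported positive probability
measure on `ℂ` whose Cauchy transform squares to `U₁/U₂` Lebesgue-almost everywhere. -/
theorem stmt7 (U₁ U₂ : Polynomial ℂ) (h₁ : U₁.Monic) (h₂ : U₂.Monic)
    (hdeg : U₂.natDegree = U₁.natDegree + 2)
    (μ ν : Measure ℂ) [IsProbabilityMeasure μ] [IsProbabilityMeasure ν]
    (hμK : ∃ K : Set ℂ, IsCompact K ∧ μ Kᶜ = 0)
    (hνK : ∃ K : Set ℂ, IsCompact K ∧ ν Kᶜ = 0)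
    (hμ : ∀ᵐ z ∂(MeasureTheory.volume : Measure ℂ),
      Integrable (fun ξ => (z - ξ)⁻¹) μ ∧
      (∫ ξ, (z - ξ)⁻¹ ∂μ) ^ 2 = U₁.eval z / U₂.eval z)
    (hν : ∀ᵐ z ∂(MeasureTheory.volume : Measure ℂ),
      Integrable (fun ξ => (z - ξ)⁻¹) ν ∧
      (∫ ξ, (z - ξ)⁻¹ ∂ν) ^ 2 = U₁.eval z / U₂.eval z) :
    μ = ν := by
  have hf : ContinuousOn (fun z => U₁.eval z / U₂.eval z) (U₂.rootSet ℂ)ᶜ :=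
    U₁.continuousOn.div U₂.continuousOn fun z hz hz₀ =>
      hz (by simpa [mem_rootSet, h₂.ne_zero] using hz₀)
  exact stmt7_general (U₂.rootSet_finite ℂ) hf μ ν hμK hνK (hμ.mono fun _ h => h.2)
    (hν.mono fun _ h => h.2)
end
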